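/- In the setting below, for every M > 0 there exists a constant C₀ > 0, depending only on p, c₁, c₂, C_U, u₋, u₊, f and M (and not on T), such that whenever ‖φ(0,·)‖_{L²} + ‖∂ₓφ(0,·)‖_{L²} + ‖∂ₓ²φ(0,·)‖_{L²} + sup_{x∈ℝ}|φ(0,x)| ≤ M, then, setting N := sup_{(t,x)∈[0,T]×ℝ} (1+(∂ₓφ(t,x))²)^{1/2}, for all t ∈ [0,T]: ∫_ℝ (1+(∂ₓφ(t,x))²)^{p−1}·(∂ₓ²φ(t,x))² dx + ∫₀^t ∫_ℝ (1+(∂ₓφ(τ,x))²)^{(p−1)/2}·(∂ₜ∂ₓφ(τ,x))² dx dτ ≤ C₀ · N^{3(1−p)}. -/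

import Mathlib

open MeasureTheory Filter Set intervalIntegral

/-- `L²` norm in the space variable. -/
noncomputable def L2norm (g : ℝ → ℝ) : ℝ := (∫ x : ℝ, (g x) ^ 2) ^ ((1 : ℝ) / 2)

/-!
The full solution `u = U + φ` solves `u_t + f(u)_x = w_x` with the viscous flux `w = σ(u_x)`. Convex
entropies bound `u` by the data. The `L²` energy of `φ` then bounds the dissipation `∬ ρ φ_x²`,
where `ρ = (1 + φ_x²)^((p-1)/2)`: the convexity of `f` and the monotonicity of `U` give the
transport term a sign, and the source `φ σ'(U_x) U_xx` decays like `(1 + t)^(-9/8)`, integrably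
in time.

Let `Λ = N^(1-p)`, so that `1 ≤ Λ ρ`. Testing the equation of `φ` with `-φ_xx` costs two powers of
`Λ` and gives `∬ ρ φ_xx² ≤ C Λ²`. Testing `-w_xx` with `w_t = σ'(u_x) u_xt` costs none:
`w_x w_xt = (w_x w_t)_x - w_xx w_t`, so `∫ w_x²` and `∬ ρ φ_xt²` are controlled by
`∬ ρ (φ_xx² + φ_x⁴)`. The quartic term is absorbed by the weighted interpolation
`∫ ρ φ_x⁴ ≤ (4 - p)² ‖φ‖_∞² ∫ ρ φ_xx²`. The resulting bound `C Λ²` is at most `C N^(3(1-p))`.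
-/

open scoped ContDiff Topology Asymptotics

/-- The partial derivative in `x` of a field `g (t, x)` on space-time. Fields are uncurried so that
joint regularity is that of `g` itself. -/
noncomputable def spaceDeriv (g : ℝ × ℝ → ℝ) (q : ℝ × ℝ) : ℝ := deriv (fun y => g (q.1, y)) q.2

/-- The partial derivative in `t` of a field `g (t, x)` on space-time. -/
noncomputable def timeDeriv (g : ℝ × ℝ → ℝ) (q : ℝ × ℝ) : ℝ := deriv (fun s => g (s, q.2)) q.1

local prefix:max "∂ₓ" => spaceDeriv
local prefix:max "∂ₜ" => timeDeriv

/-! ### Fields on space-time -/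

section PartialDerivatives

variable {g : ℝ × ℝ → ℝ}

lemma hasDerivAt_space_fderiv (hg : Differentiable ℝ g) (t x : ℝ) :
    HasDerivAt (fun y => g (t, y)) (fderiv ℝ g (t, x) (0, 1)) x :=
  (hg (t, x)).hasFDerivAt.comp_hasDerivAt x ((hasDerivAt_const x t).prodMk (hasDerivAt_id x))

lemma hasDerivAt_time_fderiv (hg : Differentiable ℝ g) (t x : ℝ) :
    HasDerivAt (fun s => g (s, x)) (fderiv ℝ g (t, x) (1, 0)) t :=
  (hg (t, x)).hasFDerivAt.comp_hasDerivAt t ((hasDerivAt_id t).prodMk (hasDerivAt_const t x))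

lemma spaceDeriv_eq_fderiv (hg : Differentiable ℝ g) : ∂ₓg = fun q => fderiv ℝ g q (0, 1) :=
  funext fun q => (hasDerivAt_space_fderiv hg q.1 q.2).deriv

lemma timeDeriv_eq_fderiv (hg : Differentiable ℝ g) : ∂ₜg = fun q => fderiv ℝ g q (1, 0) :=
  funext fun q => (hasDerivAt_time_fderiv hg q.1 q.2).deriv

lemma hasDerivAt_spaceDeriv (hg : Differentiable ℝ g) (t x : ℝ) :
    HasDerivAt (fun y => g (t, y)) (∂ₓg (t, x)) x :=
  (hasDerivAt_space_fderiv hg t x).differentiableAt.hasDerivAt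

lemma hasDerivAt_timeDeriv (hg : Differentiable ℝ g) (t x : ℝ) :
    HasDerivAt (fun s => g (s, x)) (∂ₜg (t, x)) t :=
  (hasDerivAt_time_fderiv hg t x).differentiableAt.hasDerivAt

@[fun_prop]
lemma contDiff_spaceDeriv (hg : ContDiff ℝ ∞ g) : ContDiff ℝ ∞ (∂ₓg) := by
  rw [spaceDeriv_eq_fderiv (hg.differentiable (by simp))]
  exact (hg.fderiv_right (by simp)).clm_apply contDiff_const

@[fun_prop]
lemma contDiff_timeDeriv (hg : ContDiff ℝ ∞ g) : ContDiff ℝ ∞ (∂ₜg) := by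
  rw [timeDeriv_eq_fderiv (hg.differentiable (by simp))]
  exact (hg.fderiv_right (by simp)).clm_apply contDiff_const

lemma continuous_spaceDeriv (hg : ContDiff ℝ 1 g) : Continuous (∂ₓg) := by
  rw [spaceDeriv_eq_fderiv (hg.differentiable one_ne_zero)]
  exact (hg.continuous_fderiv one_ne_zero).clm_apply continuous_const

lemma continuous_timeDeriv (hg : ContDiff ℝ 1 g) : Continuous (∂ₜg) := by
  rw [timeDeriv_eq_fderiv (hg.differentiable one_ne_zero)]
  exact (hg.continuous_fderiv one_ne_zero).clm_apply continuous_const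

lemma timeDeriv_spaceDeriv (hg : ContDiff ℝ 2 g) : ∂ₜ∂ₓg = ∂ₓ∂ₜg := by
  have hg' : Differentiable ℝ g := hg.differentiable (by simp)
  have hd : Differentiable ℝ (fderiv ℝ g) := (hg.fderiv_right le_rfl).differentiable one_ne_zero
  have happly (v : ℝ × ℝ) : Differentiable ℝ fun q => fderiv ℝ g q v :=
    hd.clm_apply (differentiable_const v)
  rw [spaceDeriv_eq_fderiv hg', timeDeriv_eq_fderiv hg', timeDeriv_eq_fderiv (happly _),
    spaceDeriv_eq_fderiv (happly _)]
  funext q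
  have hsymm : IsSymmSndFDerivAt ℝ g q :=
    hg.contDiffAt.isSymmSndFDerivAt (by rw [minSmoothness_of_isRCLikeNormedField])
  rw [fderiv_clm_apply (hd q) (by fun_prop), fderiv_clm_apply (hd q) (by fun_prop)]
  simpa using hsymm (1, 0) (0, 1)

end PartialDerivatives

section SpaceTime

/-- The space-time strip `[0, T] × ℝ`, on which all pointwise bounds are required. -/
def strip (T : ℝ) : Set (ℝ × ℝ) := Icc 0 T ×ˢ univ

/-- The space-time slab `(0, t] × ℝ`, over which the dissipation terms are integrated. -/
def slab (t : ℝ) : Set (ℝ × ℝ) := Ioc 0 t ×ˢ univ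

variable {T t x : ℝ}

lemma mk_mem_strip : (t, x) ∈ strip T ↔ t ∈ Icc 0 T := by simp [strip]

lemma slab_subset_strip (ht : t ≤ T) : slab t ⊆ strip T :=
  prod_mono (Ioc_subset_Icc_self.trans (Icc_subset_Icc_right ht)) subset_rfl

lemma measurableSet_slab : MeasurableSet (slab t) := measurableSet_Ioc.prod .univ

lemma volume_restrict_slab :
    (volume : Measure (ℝ × ℝ)).restrict (slab t) = (volume.restrict (Ioc 0 t)).prod volume := by
  rw [slab, Measure.volume_eq_prod, ← Measure.prod_restrict, Measure.restrict_univ]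

variable {g h : ℝ × ℝ → ℝ}

lemma setIntegral_slab_eq (ht : 0 ≤ t) (hg : IntegrableOn g (slab t)) :
    ∫ q in slab t, g q = ∫ s in 0..t, ∫ x, g (s, x) := by
  rw [IntegrableOn, volume_restrict_slab] at hg
  rw [volume_restrict_slab, integral_prod _ hg, intervalIntegral.integral_of_le ht]

lemma setIntegral_slab_eq_symm (ht : 0 ≤ t) (hg : IntegrableOn g (slab t)) :
    ∫ q in slab t, g q = ∫ x, ∫ s in 0..t, g (s, x) := by
  rw [IntegrableOn, volume_restrict_slab] at hg
  rw [volume_restrict_slab, integral_prod_symm _ hg]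
  simp only [intervalIntegral.integral_of_le ht]

lemma integrable_intervalIntegral_of_slab (ht : 0 ≤ t) (hg : IntegrableOn g (slab t)) :
    Integrable fun x => ∫ s in 0..t, g (s, x) := by
  rw [IntegrableOn, volume_restrict_slab] at hg
  simpa only [intervalIntegral.integral_of_le ht] using hg.integral_prod_right

lemma intervalIntegrable_integral_of_slab (ht : 0 ≤ t) (hg : IntegrableOn g (slab t)) :
    IntervalIntegrable (fun s => ∫ x, g (s, x)) volume 0 t := by
  rw [IntegrableOn, volume_restrict_slab] at hg
  exact (intervalIntegrable_iff_integrableOn_Ioc_of_le ht).2 hg.integral_prod_left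

lemma setIntegral_slab_mono (hg : IntegrableOn g (slab t)) (hh : IntegrableOn h (slab t))
    (ht : t ≤ T) (hgh : ∀ q ∈ strip T, g q ≤ h q) : ∫ q in slab t, g q ≤ ∫ q in slab t, h q :=
  setIntegral_mono_on hg hh measurableSet_slab fun q hq => hgh q (slab_subset_strip ht hq)

lemma setIntegral_slab_nonneg (ht : t ≤ T) (hg : ∀ q ∈ strip T, 0 ≤ g q) :
    0 ≤ ∫ q in slab t, g q :=
  setIntegral_nonneg measurableSet_slab fun q hq => hg q (slab_subset_strip ht hq)

lemma setIntegral_slab_le_of_forall_integral_le (ht : 0 ≤ t) (hg : IntegrableOn g (slab t))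
    (hh : IntegrableOn h (slab t))
    (hgh : ∀ s ∈ Icc 0 t, ∫ x, g (s, x) ≤ ∫ x, h (s, x)) :
    ∫ q in slab t, g q ≤ ∫ q in slab t, h q := by
  rw [setIntegral_slab_eq ht hg, setIntegral_slab_eq ht hh]
  exact intervalIntegral.integral_mono_on ht (intervalIntegrable_integral_of_slab ht hg)
    (intervalIntegrable_integral_of_slab ht hh) hgh

lemma setIntegral_slab_le_intervalIntegral {k : ℝ → ℝ} (ht : 0 ≤ t) (hg : IntegrableOn g (slab t))
    (hk : IntervalIntegrable k volume 0 t) (hgk : ∀ s ∈ Icc 0 t, ∫ x, g (s, x) ≤ k s) :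
    ∫ q in slab t, g q ≤ ∫ s in 0..t, k s := by
  rw [setIntegral_slab_eq ht hg]
  exact intervalIntegral.integral_mono_on ht (intervalIntegrable_integral_of_slab ht hg) hk hgk

/-- A continuous field whose spatial `L²` norm is bounded uniformly on `[0, T]`; continuous fields
that are `O(e ^ 2)` on the strip for such an `e` are integrable on slices and slabs. -/
structure IsUniformlyL2 (T : ℝ) (e : ℝ × ℝ → ℝ) : Prop where
  continuous : Continuous e
  integrable_sq : ∀ t ∈ Icc 0 T, Integrable fun x => e (t, x) ^ 2
  exists_integral_sq_le : ∃ K, ∀ t ∈ Icc 0 T, ∫ x, e (t, x) ^ 2 ≤ K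

variable {e : ℝ × ℝ → ℝ}

lemma integrable_slice (he : IsUniformlyL2 T e) (hgc : Continuous g)
    (hg : g =O[𝓟 (strip T)] fun q => e q ^ 2) (ht : t ∈ Icc 0 T) :
    Integrable fun x => g (t, x) := by
  obtain ⟨C, hC⟩ := Asymptotics.isBigO_principal.1 hg
  refine ((he.integrable_sq t ht).norm.const_mul C).mono'
    (hgc.comp (Continuous.prodMk_right t)).aestronglyMeasurable (.of_forall fun x => ?_)
  exact hC (t, x) (mk_mem_strip.2 ht)

lemma integrableOn_slab_sq (he : IsUniformlyL2 T e) (ht : t ∈ Icc 0 T) :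
    IntegrableOn (fun q => e q ^ 2) (slab t) := by
  obtain ⟨K, hK⟩ := he.exists_integral_sq_le
  have hc : Continuous fun q => e q ^ 2 := he.continuous.pow 2
  have hsub : ∀ s ∈ Ioc 0 t, s ∈ Icc 0 T := fun s hs => ⟨hs.1.le, hs.2.trans ht.2⟩
  rw [IntegrableOn, volume_restrict_slab, integrable_prod_iff hc.aestronglyMeasurable]
  refine ⟨(ae_restrict_mem measurableSet_Ioc).mono fun s hs => he.integrable_sq s (hsub s hs), ?_⟩
  refine Measure.integrableOn_of_bounded (M := K) (by simp)
    hc.norm.stronglyMeasurable.integral_prod_right'.aestronglyMeasurable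
    ((ae_restrict_mem measurableSet_Ioc).mono fun s hs => ?_)
  simp only [norm_pow, Real.norm_eq_abs, sq_abs]
  rw [abs_of_nonneg (integral_nonneg fun x => sq_nonneg _)]
  exact hK s (hsub s hs)

lemma integrableOn_slab (he : IsUniformlyL2 T e) (hgc : Continuous g)
    (hg : g =O[𝓟 (strip T)] fun q => e q ^ 2) (ht : t ∈ Icc 0 T) : IntegrableOn g (slab t) := by
  obtain ⟨C, hC⟩ := Asymptotics.isBigO_principal.1 hg
  refine ((integrableOn_slab_sq he ht).norm.const_mul C).mono' hgc.aestronglyMeasurable ?_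
  filter_upwards [ae_restrict_mem measurableSet_slab] with q hq
  exact hC q (slab_subset_strip ht.2 hq)

lemma hasDerivAt_intervalIntegral_space (hg : ContDiff ℝ 1 g) (t x : ℝ) :
    HasDerivAt (fun x => ∫ s in 0..t, g (s, x)) (∫ s in 0..t, ∂ₓg (s, x)) x := by
  have hgx := continuous_spaceDeriv hg
  obtain ⟨C, hC⟩ := (isCompact_uIcc.prod (isCompact_closedBall x 1)).exists_bound_of_continuousOn
    (s := uIcc 0 t ×ˢ Metric.closedBall x 1) hgx.continuousOn
  refine (hasDerivAt_integral_of_dominated_loc_of_deriv_le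
    (F' := fun x s => ∂ₓg (s, x)) (bound := fun _ => C) (Metric.ball_mem_nhds x one_pos)
    (.of_forall fun y => (hg.continuous.comp (Continuous.prodMk_left y)).aestronglyMeasurable)
    ((hg.continuous.comp (Continuous.prodMk_left x)).intervalIntegrable _ _)
    (hgx.comp (Continuous.prodMk_left x)).aestronglyMeasurable ?_ (by simp)
    (.of_forall fun s _ y _ => hasDerivAt_spaceDeriv (hg.differentiable one_ne_zero) s y)).2
  exact .of_forall fun s hs y hy =>
    hC (s, y) ⟨uIoc_subset_uIcc hs, Metric.ball_subset_closedBall hy⟩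

lemma integral_sub_integral_eq_setIntegral_slab (he : IsUniformlyL2 T e) {F G : ℝ × ℝ → ℝ}
    (hFd : ContDiff ℝ 1 F) (hGd : ContDiff ℝ 1 G)
    (hF : F =O[𝓟 (strip T)] fun q => e q ^ 2) (hG : G =O[𝓟 (strip T)] fun q => e q ^ 2)
    (hFG : (fun q => ∂ₜF q + ∂ₓG q) =O[𝓟 (strip T)] fun q => e q ^ 2) (ht : t ∈ Icc 0 T) :
    (∫ x, F (t, x)) - ∫ x, F (0, x) = ∫ q in slab t, (∂ₜF q + ∂ₓG q) := by
  have hFt := continuous_timeDeriv hFd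
  have hGx := continuous_spaceDeriv hGd
  have hGi := integrableOn_slab he hGd.continuous hG ht
  have hFGi : IntegrableOn (fun q => ∂ₜF q + ∂ₓG q) (slab t) :=
    integrableOn_slab he (hFt.add hGx) hFG ht
  have hFi := integrable_slice he hFd.continuous hF ht
  have hF0i := integrable_slice he hFd.continuous hF ⟨le_rfl, ht.1.trans ht.2⟩
  have hdiff : Integrable fun x => F (t, x) - F (0, x) := hFi.sub hF0i
  have hline {k : ℝ × ℝ → ℝ} (hk : Continuous k) (x : ℝ) :
      IntervalIntegrable (fun s => k (s, x)) volume 0 t :=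
    (hk.comp (Continuous.prodMk_left x)).intervalIntegrable _ _
  -- `∂ₜF` and `∂ₓG` need not be separately integrable over the slab, so `∂ₓG` is first
  -- integrated in time, where the integral of `∂ₜF` is explicit.
  have hflux (x : ℝ) : ∫ s in 0..t, ∂ₓG (s, x)
      = (∫ s in 0..t, (∂ₜF (s, x) + ∂ₓG (s, x))) - (F (t, x) - F (0, x)) := by
    rw [intervalIntegral.integral_add (hline hFt x) (hline hGx x),
      intervalIntegral.integral_eq_sub_of_hasDerivAt
        (fun s _ => hasDerivAt_timeDeriv (hFd.differentiable one_ne_zero) s x) (hline hFt x)]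
    ring
  have hzero := integral_eq_zero_of_hasDerivAt_of_integrable
    (hasDerivAt_intervalIntegral_space hGd t)
    (((integrable_intervalIntegral_of_slab ht.1 hFGi).sub hdiff).congr
      (.of_forall fun x => (hflux x).symm))
    (integrable_intervalIntegral_of_slab ht.1 hGi)
  simp only [hflux] at hzero
  rw [MeasureTheory.integral_sub (integrable_intervalIntegral_of_slab ht.1 hFGi) hdiff,
    MeasureTheory.integral_sub hFi hF0i, ← setIntegral_slab_eq_symm ht.1 hFGi] at hzero
  linarith

lemma integral_le_integral_add_setIntegral_slab (he : IsUniformlyL2 T e)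
    {F G D H : ℝ × ℝ → ℝ} (hFd : ContDiff ℝ 1 F) (hGd : ContDiff ℝ 1 G)
    (hF : F =O[𝓟 (strip T)] fun q => e q ^ 2) (hG : G =O[𝓟 (strip T)] fun q => e q ^ 2)
    (hFG : EqOn (fun q => ∂ₜF q + ∂ₓG q) D (strip T)) (hD : D =O[𝓟 (strip T)] fun q => e q ^ 2)
    (ht : t ∈ Icc 0 T) (hH : IntegrableOn H (slab t)) (hDH : ∀ q ∈ strip T, D q ≤ H q) :
    ∫ x, F (t, x) ≤ (∫ x, F (0, x)) + ∫ q in slab t, H q := by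
  have hFG' : (fun q => ∂ₜF q + ∂ₓG q) =O[𝓟 (strip T)] fun q => e q ^ 2 :=
    hD.congr' (hFG.symm.eventuallyEq_of_mem (mem_principal_self _)) .rfl
  have hbalance := integral_sub_integral_eq_setIntegral_slab he hFd hGd hF hG hFG' ht
  have hFGc : Continuous fun q => ∂ₜF q + ∂ₓG q :=
    (continuous_timeDeriv hFd).add (continuous_spaceDeriv hGd)
  have hmono := setIntegral_slab_mono (integrableOn_slab he hFGc hFG' ht) hH ht.2
    fun q hq => (hFG hq).trans_le (hDH q hq)
  linarith

end SpaceTime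

/-! ### Real functions -/

section RealFunctions

lemma L2norm_nonneg (g : ℝ → ℝ) : 0 ≤ L2norm g :=
  Real.rpow_nonneg (integral_nonneg fun _ => sq_nonneg _) _

lemma L2norm_sq (g : ℝ → ℝ) : L2norm g ^ 2 = ∫ x, g x ^ 2 := by
  rw [L2norm, ← Real.sqrt_eq_rpow, Real.sq_sqrt (integral_nonneg fun _ => sq_nonneg _)]

lemma integral_sq_le_of_L2norm_le {g : ℝ → ℝ} {a : ℝ} (h : L2norm g ≤ a) :
    ∫ x, g x ^ 2 ≤ a ^ 2 :=
  (L2norm_sq g).symm.trans_le (pow_le_pow_left₀ (L2norm_nonneg g) h 2)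

lemma integral_one_add_rpow_le {r t : ℝ} (hr : r < -1) (ht : 0 ≤ t) :
    ∫ s in 0..t, (1 + s) ^ r ≤ -(r + 1)⁻¹ := by
  have hzero : (0 : ℝ) ∉ uIcc 1 (1 + t) := by
    rw [uIcc_of_le (by linarith)]
    exact fun h => absurd h.1 (by norm_num)
  rw [intervalIntegral.integral_comp_add_left (fun s => s ^ r), add_zero,
    integral_rpow (.inr ⟨hr.ne, hzero⟩), Real.one_rpow, ← one_div, ← div_neg_eq_neg_div,
    ← neg_div_neg_eq, neg_sub]
  have hpow : 0 ≤ (1 + t) ^ (r + 1) := by positivity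
  exact div_le_div_of_nonneg_right (by linarith) (by linarith)

lemma intervalIntegrable_one_add_rpow {r t : ℝ} (ht : 0 ≤ t) :
    IntervalIntegrable (fun s => (1 + s) ^ r) volume 0 t := by
  refine ContinuousOn.intervalIntegrable (.rpow_const (by fun_prop) fun s hs => .inl ?_)
  rw [uIcc_of_le ht] at hs
  exact (add_pos_of_pos_of_nonneg one_pos hs.1).ne'

lemma hasDerivAt_deriv_of_contDiff {n : WithTop ℕ∞} {F : ℝ → ℝ} (hF : ContDiff ℝ n F)
    (hn : n ≠ 0) (s : ℝ) : HasDerivAt F (deriv F s) s :=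
  (hF.differentiable hn s).hasDerivAt

lemma abs_sub_sub_deriv_mul_le {F F' F'' : ℝ → ℝ} {S : Set ℝ} {L x y : ℝ} (hS : Convex ℝ S)
    (hF : ∀ z ∈ S, HasDerivAt F (F' z) z) (hF' : ∀ z ∈ S, HasDerivAt F' (F'' z) z)
    (hL : ∀ z ∈ S, |F'' z| ≤ L) (hx : x ∈ S) (hy : y ∈ S) :
    |F y - F x - F' x * (y - x)| ≤ L * (y - x) ^ 2 := by
  have hL0 : 0 ≤ L := (abs_nonneg _).trans (hL x hx)
  have hsub : uIcc x y ⊆ S := by rw [← segment_eq_uIcc]; exact hS.segment_subset hx hy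
  have hlip : ∀ z ∈ uIcc x y, ‖F' z - F' x‖ ≤ L * |y - x| := fun z hz =>
    (hS.norm_image_sub_le_of_norm_hasDerivWithin_le
      (fun z hz => (hF' z hz).hasDerivWithinAt) hL hx (hsub hz)).trans
      (mul_le_mul_of_nonneg_left (abs_sub_left_of_mem_uIcc hz) hL0)
  have hmvt := (convex_uIcc x y).norm_image_sub_le_of_norm_hasDerivWithin_le
    (f := fun z => F z - F' x * z) (f' := fun z => F' z - F' x)
    (fun z hz => by
      simpa using! ((hF z (hsub hz)).sub ((hasDerivAt_id z).const_mul (F' x))).hasDerivWithinAt)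
    hlip left_mem_uIcc right_mem_uIcc
  rw [Real.norm_eq_abs, Real.norm_eq_abs, mul_assoc, ← sq, sq_abs] at hmvt
  convert hmvt using 2
  ring

/-- The Landau–Kolmogorov trick: the quadratic lower Taylor bound of a nonnegative function has
nonpositive discriminant. -/
lemma deriv_sq_le_of_nonneg {F F' F'' : ℝ → ℝ} {L : ℝ} (hF : ∀ x, HasDerivAt F (F' x) x)
    (hF' : ∀ x, HasDerivAt F' (F'' x) x) (hpos : ∀ x, 0 ≤ F x) (hL : ∀ x, |F'' x| ≤ L) (x : ℝ) :
    F' x ^ 2 ≤ 4 * L * F x := by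
  have hquad (s : ℝ) : 0 ≤ L * (s * s) + F' x * s + F x := by
    have htaylor := abs_sub_sub_deriv_mul_le convex_univ (fun z _ => hF z) (fun z _ => hF' z)
      (fun z _ => hL z) (mem_univ x) (mem_univ (x + s))
    rw [add_sub_cancel_left] at htaylor
    linarith [(abs_le.1 htaylor).2, hpos (x + s)]
  have hdiscrim := discrim_le_zero hquad
  rw [discrim] at hdiscrim
  linarith

lemma mul_sq_le_mul_sub_of_le_deriv {F : ℝ → ℝ} (hF : Differentiable ℝ F) {a v m : ℝ}
    (hm : ∀ s, |s| ≤ |v| → m ≤ deriv F (a + s)) : m * v ^ 2 ≤ v * (F (a + v) - F a) := by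
  have hmono := (convex_uIcc a (a + v)).mul_sub_le_image_sub_of_le_deriv
    hF.continuous.continuousOn (fun x _ => (hF x).differentiableWithinAt) (C := m) fun x hx => by
      have habs := abs_sub_left_of_mem_uIcc (interior_subset hx)
      simpa using hm (x - a) (by simpa using habs)
  rcases le_total 0 v with hv | hv
  · nlinarith [hmono a left_mem_uIcc (a + v) right_mem_uIcc (by linarith)]
  · nlinarith [hmono (a + v) right_mem_uIcc a left_mem_uIcc (by linarith)]

lemma deriv_mul_sub_le_sub_of_convexOn {F : ℝ → ℝ} (hF : Differentiable ℝ F)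
    (hconv : ConvexOn ℝ univ F) (x y : ℝ) : deriv F x * (y - x) ≤ F y - F x := by
  rcases lt_trichotomy x y with hxy | rfl | hxy
  · have hslope := hconv.deriv_le_slope (mem_univ x) (mem_univ y) hxy (hF x)
    rwa [slope_def_field, le_div_iff₀ (sub_pos.2 hxy)] at hslope
  · simp
  · have hslope := hconv.slope_le_deriv (mem_univ y) (mem_univ x) hxy (hF x)
    rw [slope_def_field, div_le_iff₀ (sub_pos.2 hxy)] at hslope
    linarith

lemma integrable_of_hasDerivAt_nonneg_of_abs_le {G g : ℝ → ℝ} {B : ℝ}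
    (hG : ∀ x, HasDerivAt G (g x) x) (hgc : Continuous g) (hg : ∀ x, 0 ≤ g x)
    (hB : ∀ x, |G x| ≤ B) : Integrable g := by
  refine integrable_of_intervalIntegral_norm_bounded (2 * B) (fun n : ℕ => hgc.integrableOn_Ioc)
    (tendsto_neg_atTop_atBot.comp tendsto_natCast_atTop_atTop) tendsto_natCast_atTop_atTop
    (.of_forall fun n => ?_)
  simp only [Real.norm_of_nonneg (hg _), Function.comp_apply]
  rw [intervalIntegral.integral_eq_sub_of_hasDerivAt (fun s _ => hG s)
    (hgc.intervalIntegrable _ _)]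
  linarith [(abs_le.1 (hB n)).2, (abs_le.1 (hB (-n))).1]

lemma le_two_mul_of_le_add_half {α : Type*} {s : Set α} {E : α → ℝ} {A : ℝ}
    (hbdd : BddAbove (E '' s)) (h : ∀ S, (∀ t ∈ s, E t ≤ S) → ∀ t ∈ s, E t ≤ A + S / 2) :
    ∀ t ∈ s, E t ≤ 2 * A := by
  intro t ht
  have hsup : ∀ r ∈ s, E r ≤ sSup (E '' s) := fun r hr => le_csSup hbdd (mem_image_of_mem E hr)
  have hle : sSup (E '' s) ≤ A + sSup (E '' s) / 2 :=
    csSup_le ⟨_, mem_image_of_mem E ht⟩ (forall_mem_image.2 (h _ hsup))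
  linarith [hsup t ht]

lemma hasDerivAt_max_zero_pow (n : ℕ) (r : ℝ) :
    HasDerivAt (fun r : ℝ => max r 0 ^ (n + 2)) ((n + 2 : ℕ) * max r 0 ^ (n + 1)) r := by
  rcases lt_trichotomy r 0 with h | rfl | h
  · have hzero : (fun r : ℝ => max r 0 ^ (n + 2)) =ᶠ[𝓝 r] fun _ => 0 := by
      filter_upwards [gt_mem_nhds h] with s hs
      simp [max_eq_right hs.le]
    simpa [max_eq_right h.le] using (hasDerivAt_const r (0 : ℝ)).congr_of_eventuallyEq hzero
  · have hsmall : (fun r : ℝ => max r 0 ^ (n + 2)) =O[𝓝 0] fun r => ‖r - 0‖ ^ (n + 2) := by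
      refine .of_bound 1 (.of_forall fun s => ?_)
      simp only [sub_zero, norm_pow, norm_norm, one_mul]
      gcongr
      exact abs_max_le_max_abs_abs.trans (by simp)
    simpa using (hsmall.hasFDerivAt (by lia)).hasDerivAt
  · have hpow : (fun r : ℝ => max r 0 ^ (n + 2)) =ᶠ[𝓝 r] fun r => r ^ (n + 2) := by
      filter_upwards [lt_mem_nhds h] with s hs
      rw [max_eq_left hs.le]
    rw [max_eq_left h.le]
    exact (hasDerivAt_pow (n + 2) r).congr_of_eventuallyEq hpow

lemma one_add_rpow_le_one {r t : ℝ} (ht : 0 ≤ t) (hr : r ≤ 0) : (1 + t) ^ r ≤ 1 :=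
  Real.rpow_le_one_of_one_le_of_nonpos (by linarith) hr

lemma inv_one_add_sq_eq_rpow {s : ℝ} (hs : 0 ≤ s) : (1 + s)⁻¹ ^ 2 = (1 + s) ^ (-2 : ℝ) := by
  rw [inv_pow, ← Real.rpow_natCast, ← Real.rpow_neg (by linarith)]
  norm_num

lemma contDiff_max_zero_pow (n : ℕ) : ContDiff ℝ n fun r : ℝ => max r 0 ^ (n + 1) := by
  induction n with
  | zero => exact contDiff_zero.2 (by fun_prop)
  | succ n ih =>
    rw [Nat.cast_succ, contDiff_succ_iff_deriv]
    refine ⟨fun r => (hasDerivAt_max_zero_pow n r).differentiableAt, by simp, ?_⟩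
    rw [funext fun r => (hasDerivAt_max_zero_pow n r).deriv]
    exact contDiff_const.mul ih

lemma hasDerivAt_max_affine_pow (ε R : ℝ) (n : ℕ) (s : ℝ) :
    HasDerivAt (fun s => max (ε * s - R) 0 ^ (n + 2))
      (ε * (n + 2 : ℕ) * max (ε * s - R) 0 ^ (n + 1)) s := by
  have haff : HasDerivAt (fun s => ε * s - R) ε s := by
    simpa using ((hasDerivAt_id s).const_mul ε).sub_const R
  convert! (hasDerivAt_max_zero_pow n _).comp s haff using 1
  ring

lemma exists_contDiff_primitive {n : ℕ} {F : ℝ → ℝ} (hF : ContDiff ℝ n F) :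
    ∃ Φ : ℝ → ℝ, ContDiff ℝ (n + 1) Φ ∧ deriv Φ = F := by
  have hderiv (s : ℝ) : HasDerivAt (fun s => ∫ r in (0 : ℝ)..s, F r) (F s) s :=
    (hF.continuous.integral_hasStrictDerivAt 0 s).hasDerivAt
  have hfun := funext fun s => (hderiv s).deriv
  exact ⟨_, contDiff_succ_iff_deriv.2
    ⟨fun s => (hderiv s).differentiableAt, by simp, hfun.symm ▸ hF⟩, hfun⟩

lemma mul_le_weighted_sq_add_sq {a r Λ : ℝ} (ha : 0 < a) (hr : 0 < r) (hΛ : 1 ≤ Λ * r) (X Y : ℝ) :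
    X * Y ≤ a * r / 8 * X ^ 2 + 2 * Λ / a * Y ^ 2 := by
  have hyoung : X * Y ≤ a * r / 8 * X ^ 2 + 2 / (a * r) * Y ^ 2 := by
    have hsq : a * r / 8 * X ^ 2 + 2 / (a * r) * Y ^ 2 - X * Y
        = a * r / 8 * (X - 4 / (a * r) * Y) ^ 2 := by
      field_simp
      ring
    linarith [mul_nonneg (by positivity : 0 ≤ a * r / 8) (sq_nonneg (X - 4 / (a * r) * Y))]
  have hcoeff : 2 / (a * r) ≤ 2 * Λ / a := by
    rw [div_le_div_iff₀ (by positivity) ha]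
    nlinarith
  exact hyoung.trans (by gcongr)

/-- The pointwise form of the estimate of `-φ_xx φ_t`, where `φ_t = s (X + Y) - A - B`. -/
lemma neg_mul_le_of_ellipticity {a c r s Λ X Y A B : ℝ} (ha : 0 < a) (hr : 0 < r)
    (hΛ : 1 ≤ Λ * r) (hs : a * r ≤ s) (hsc : s ≤ c) :
    -(X * (s * (Y + X) - A - B))
      ≤ -(a / 4) * (r * X ^ 2) + c / 2 * Y ^ 2 + 2 * Λ / a * A ^ 2 + 2 * Λ / a * B ^ 2 := by
  have hA := mul_le_weighted_sq_add_sq ha hr hΛ X A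
  have hB := mul_le_weighted_sq_add_sq ha hr hΛ X B
  have hX := mul_le_mul_of_nonneg_right hs (sq_nonneg X)
  have hY := mul_le_mul_of_nonneg_right hsc (sq_nonneg Y)
  have hs0 : 0 ≤ s := (mul_pos ha hr).le.trans hs
  nlinarith [mul_nonneg hs0 (sq_nonneg (X + Y))]

lemma neg_mul_le_of_two_sided_ellipticity {a b r s X Y Z : ℝ} (ha : 0 < a) (hr : 0 < r)
    (hr1 : r ≤ 1) (has : a * r ≤ s) (hsb : s ≤ b * r) :
    -((Y + X + Z) * (s * (Y + X)))
      ≤ -(a / 4) * (r * X ^ 2) + a / 2 * Y ^ 2 + b / 2 * (r * Z ^ 2) := by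
  have hs : 0 ≤ s := (mul_pos ha hr).le.trans has
  have hyoung : -((Y + X + Z) * (s * (Y + X))) ≤ s * Z ^ 2 / 2 - s * (Y + X) ^ 2 / 2 := by
    linarith [mul_nonneg hs (sq_nonneg (Y + X + Z))]
  have hX : X ^ 2 / 2 - Y ^ 2 ≤ (Y + X) ^ 2 := by linarith [sq_nonneg (X + 2 * Y)]
  have hlower : a * r * (X ^ 2 / 2 - Y ^ 2) ≤ s * (Y + X) ^ 2 :=
    (mul_le_mul_of_nonneg_left hX (mul_pos ha hr).le).trans
      (mul_le_mul_of_nonneg_right has (sq_nonneg _))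
  have hupper : s * Z ^ 2 ≤ b * r * Z ^ 2 := mul_le_mul_of_nonneg_right hsb (sq_nonneg _)
  have hY : r * (a * Y ^ 2) ≤ a * Y ^ 2 := mul_le_of_le_one_left (by positivity) hr1
  linarith

end RealFunctions

/-! ### The degenerate weight -/

section Weight

/-- The degenerate weight `(1 + v²)^((p-1)/2)`, comparable to the viscosity `σ'(v)`. -/
noncomputable def weight (p v : ℝ) : ℝ := (1 + v ^ 2) ^ ((p - 1) / 2)

variable {p : ℝ}

lemma weight_pos (p v : ℝ) : 0 < weight p v := Real.rpow_pos_of_pos (by positivity) _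

lemma weight_le_one (hp : p ≤ 1) (v : ℝ) : weight p v ≤ 1 :=
  Real.rpow_le_one_of_one_le_of_nonpos (by nlinarith [sq_nonneg v]) (by linarith)

lemma weight_sq (p v : ℝ) : weight p v ^ 2 = (1 + v ^ 2) ^ (p - 1) := by
  rw [weight, ← Real.rpow_natCast, ← Real.rpow_mul (by positivity)]
  congr 1
  push_cast
  ring

@[fun_prop]
lemma contDiff_weight (p : ℝ) : ContDiff ℝ ∞ (weight p) :=
  ContDiff.rpow_const_of_ne (by fun_prop) fun v => by positivity

lemma one_le_rpow_mul_weight {v N : ℝ} (hp : p ≤ 1) (hN : (1 + v ^ 2) ^ ((1 : ℝ) / 2) ≤ N) :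
    1 ≤ N ^ (1 - p) * weight p v := by
  have hbase : (0 : ℝ) < 1 + v ^ 2 := by positivity
  calc 1 = ((1 + v ^ 2) ^ ((1 : ℝ) / 2)) ^ (1 - p) * weight p v := by
        rw [weight, ← Real.rpow_mul hbase.le, ← Real.rpow_add hbase,
          show (1 : ℝ) / 2 * (1 - p) + (p - 1) / 2 = 0 by ring, Real.rpow_zero]
    _ ≤ N ^ (1 - p) * weight p v := by
        have := weight_pos p v
        gcongr

lemma weight_le_mul_weight_add {A a b c : ℝ} (hp : p ≤ 1) (ha : |a| ≤ A) (hc : |c| ≤ |b|) :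
    weight p b ≤ (2 + 2 * A ^ 2) ^ ((1 - p) / 2) * weight p (a + c) := by
  have hA : a ^ 2 ≤ A ^ 2 := sq_le_sq' (by linarith [neg_abs_le a]) ((le_abs_self a).trans ha)
  have hcb : c ^ 2 ≤ b ^ 2 := sq_le_sq.2 hc
  have hbase : 1 + (a + c) ^ 2 ≤ (2 + 2 * A ^ 2) * (1 + b ^ 2) := by
    nlinarith [sq_nonneg (a - c), sq_nonneg (A * b)]
  have hpow := Real.rpow_le_rpow_of_nonpos (z := (p - 1) / 2) (by positivity) hbase (by linarith)
  rw [Real.mul_rpow (by positivity) (by positivity)] at hpow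
  calc weight p b
      = (2 + 2 * A ^ 2) ^ ((1 - p) / 2) * ((2 + 2 * A ^ 2) ^ ((p - 1) / 2) * weight p b) := by
        rw [← mul_assoc, ← Real.rpow_add (by positivity)]
        ring_nf
        simp
    _ ≤ _ := mul_le_mul_of_nonneg_left hpow (by positivity)

lemma abs_mul_deriv_weight_le (hp : p ≤ 1) (v : ℝ) :
    |v * deriv (weight p) v| ≤ (1 - p) * weight p v := by
  have hbase : (0 : ℝ) < 1 + v ^ 2 := by positivity
  have hderiv : HasDerivAt (weight p) _ v :=
    (((hasDerivAt_pow 2 v).const_add 1).rpow_const (p := (p - 1) / 2) (.inl hbase.ne'))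
  have hformula : v * deriv (weight p) v = -((1 - p) * (v ^ 2 / (1 + v ^ 2)) * weight p v) := by
    rw [hderiv.deriv, Real.rpow_sub_one hbase.ne', weight]
    field_simp
    ring
  have hfrac : v ^ 2 / (1 + v ^ 2) ≤ 1 := (div_le_one hbase).2 (by linarith)
  have hp' : 0 ≤ 1 - p := by linarith
  have hw := (weight_pos p v).le
  rw [hformula, abs_neg, abs_of_nonneg (by positivity)]
  gcongr
  exact mul_le_of_le_one_right hp' hfrac

/-- If `a' = v` and `v' = b`, the first two summands on the left are the derivative of
`a * v ^ 3 * weight p v`, whose integral vanishes. -/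
lemma abs_interpolation_defect_le {a b v K : ℝ} (hp : p ≤ 1) (ha : |a| ≤ K) :
    |v * (v ^ 3 * weight p v)
        + a * ((3 * v ^ 2 * b) * weight p v + v ^ 3 * (deriv (weight p) v * b))
        - weight p v * v ^ 4|
      ≤ (1 / 2) * (weight p v * v ^ 4)
        + (1 / 2) * ((4 - p) ^ 2 * K ^ 2) * (weight p v * b ^ 2) := by
  have hw := (weight_pos p v).le
  have hcoeff : |3 * weight p v + v * deriv (weight p) v| ≤ (4 - p) * weight p v := by
    have h := abs_le.1 (abs_mul_deriv_weight_le hp v)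
    rw [abs_le]
    constructor <;> nlinarith
  calc |_| = |a| * |3 * weight p v + v * deriv (weight p) v| * (v ^ 2 * |b|) := by
        rw [← abs_sq v, ← abs_mul, ← abs_mul, ← abs_mul, abs_sq]
        congr 1
        ring
    _ ≤ K * ((4 - p) * weight p v) * (v ^ 2 * |b|) := by
        have := (abs_nonneg a).trans ha
        gcongr
    _ ≤ _ := by
        have hsq := mul_nonneg hw (sq_nonneg (v ^ 2 - (4 - p) * K * |b|))
        rw [← sq_abs b]
        linarith

lemma integral_weight_mul_pow_four_le {g g' g'' : ℝ → ℝ} {K : ℝ} (hp : p ≤ 1)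
    (hg : ∀ x, HasDerivAt g (g' x) x) (hg' : ∀ x, HasDerivAt g' (g'' x) x)
    (hg''c : Continuous g'') (hK : ∀ x, |g x| ≤ K)
    (hint : Integrable fun x => g x * (g' x ^ 3 * weight p (g' x)))
    (hint₄ : Integrable fun x => weight p (g' x) * g' x ^ 4)
    (hint₂ : Integrable fun x => weight p (g' x) * g'' x ^ 2) :
    ∫ x, weight p (g' x) * g' x ^ 4
      ≤ (4 - p) ^ 2 * K ^ 2 * ∫ x, weight p (g' x) * g'' x ^ 2 := by
  have hw (v : ℝ) : HasDerivAt (weight p) (deriv (weight p) v) v :=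
    hasDerivAt_deriv_of_contDiff (contDiff_weight p) (by simp) v
  have hwc : Continuous (deriv (weight p)) := (contDiff_weight p).continuous_deriv (by simp)
  have hw'c := (contDiff_weight p).continuous
  have hgc : Continuous g := continuous_iff_continuousAt.2 fun x => (hg x).continuousAt
  have hg'c : Continuous g' := continuous_iff_continuousAt.2 fun x => (hg' x).continuousAt
  set D : ℝ → ℝ := fun x => g' x * (g' x ^ 3 * weight p (g' x)) + g x *
    ((3 * g' x ^ 2 * g'' x) * weight p (g' x) + g' x ^ 3 * (deriv (weight p) (g' x) * g'' x))
  have hD (x : ℝ) : HasDerivAt (fun x => g x * (g' x ^ 3 * weight p (g' x))) (D x) x := by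
    simpa using! (hg x).mul (((hg' x).pow 3).mul ((hw (g' x)).comp x (hg' x)))
  set B : ℝ → ℝ := fun x => (1 / 2) * (weight p (g' x) * g' x ^ 4)
    + (1 / 2) * ((4 - p) ^ 2 * K ^ 2) * (weight p (g' x) * g'' x ^ 2)
  have hDB (x : ℝ) : |D x - weight p (g' x) * g' x ^ 4| ≤ B x :=
    abs_interpolation_defect_le hp (hK x)
  have hBi : Integrable B := (hint₄.const_mul _).add (hint₂.const_mul _)
  have hDi : Integrable D := by
    refine (hint₄.add hBi).mono' (by fun_prop) (.of_forall fun x => ?_)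
    have hpos : 0 ≤ weight p (g' x) * g' x ^ 4 := mul_nonneg (weight_pos _ _).le (by positivity)
    simp only [Real.norm_eq_abs, Pi.add_apply, abs_le]
    constructor <;> linarith [abs_le.1 (hDB x)]
  have hzero := integral_eq_zero_of_hasDerivAt_of_integrable hD hDi hint
  have hmono : ∫ x, weight p (g' x) * g' x ^ 4 ≤ ∫ x, (B x + D x) :=
    integral_mono hint₄ (hBi.add hDi) fun x => by linarith [neg_le_of_abs_le (hDB x)]
  rw [MeasureTheory.integral_add hBi hDi, hzero, add_zero,
    MeasureTheory.integral_add (hint₄.const_mul _) (hint₂.const_mul _),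
    MeasureTheory.integral_const_mul, MeasureTheory.integral_const_mul] at hmono
  linarith

end Weight

/-! ### Domination of fields -/

section Domination

variable {α : Type*} {l : Filter α} {s : Set α} {g h k : α → ℝ} {F : ℝ → ℝ}

lemma isBigO_bounded_mul (hg : g =O[l] fun _ => (1 : ℝ)) (hh : h =O[l] k) :
    (fun q => g q * h q) =O[l] k := by
  simpa only [one_mul] using hg.mul hh

lemma isBigO_mul_sq (hg : g =O[l] k) (hh : h =O[l] k) :
    (fun q => g q * h q) =O[l] fun q => k q ^ 2 := by
  simpa only [sq] using hg.mul hh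

lemma isBigO_one_principal_iff :
    g =O[𝓟 s] (fun _ => (1 : ℝ)) ↔ ∃ C, ∀ q ∈ s, |g q| ≤ C := by
  simp only [Asymptotics.isBigO_principal, norm_one, mul_one, Real.norm_eq_abs]

lemma isBigO_one_comp (hg : g =O[𝓟 s] fun _ => (1 : ℝ)) (hF : Continuous F) :
    (fun q => F (g q)) =O[𝓟 s] fun _ => (1 : ℝ) := by
  rw [isBigO_one_principal_iff] at hg ⊢
  obtain ⟨C, hC⟩ := hg
  obtain ⟨K, hK⟩ := (isCompact_Icc (a := -C) (b := C)).exists_bound_of_continuousOn hF.continuousOn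
  exact ⟨K, fun q hq => hK _ (abs_le.1 (hC q hq))⟩

lemma isBigO_comp_add_sub_comp (hF : ContDiff ℝ 1 F) (hg : g =O[𝓟 s] fun _ => (1 : ℝ))
    (hh : h =O[𝓟 s] fun _ => (1 : ℝ)) : (fun q => F (g q + h q) - F (g q)) =O[𝓟 s] h := by
  obtain ⟨C, hC⟩ := isBigO_one_principal_iff.1 hg
  obtain ⟨D, hD⟩ := isBigO_one_principal_iff.1 (hg.add hh)
  obtain ⟨L, hL⟩ := hF.locallyLipschitz.locallyLipschitzOn.exists_lipschitzOnWith_of_compact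
    (isCompact_Icc (a := -max C D) (b := max C D))
  refine .of_bound L (eventually_principal.2 fun q hq => ?_)
  have hmem : ∀ {v}, |v| ≤ max C D → v ∈ Icc (-max C D) (max C D) := abs_le.1
  simpa [Real.dist_eq] using hL.dist_le_mul _ (hmem ((hD q hq).trans (le_max_right _ _))) _
    (hmem ((hC q hq).trans (le_max_left _ _)))

lemma isBigO_taylor (hF : ContDiff ℝ 2 F) (hg : g =O[𝓟 s] fun _ => (1 : ℝ))
    (hh : h =O[𝓟 s] fun _ => (1 : ℝ)) :
    (fun q => F (g q + h q) - F (g q) - deriv F (g q) * h q) =O[𝓟 s] fun q => h q ^ 2 := by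
  obtain ⟨C, hC⟩ := isBigO_one_principal_iff.1 hg
  obtain ⟨D, hD⟩ := isBigO_one_principal_iff.1 (hg.add hh)
  have hF' : ContDiff ℝ 1 (deriv F) := hF.deriv'
  obtain ⟨L, hL⟩ := (isCompact_Icc (a := -max C D) (b := max C D)).exists_bound_of_continuousOn
    (hF'.continuous_deriv le_rfl).continuousOn
  have hmem : ∀ {v}, |v| ≤ max C D → v ∈ Icc (-max C D) (max C D) := abs_le.1
  refine .of_bound L (eventually_principal.2 fun q hq => ?_)
  have htaylor := abs_sub_sub_deriv_mul_le (convex_Icc _ _)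
    (fun z _ => hasDerivAt_deriv_of_contDiff hF (by simp) z)
    (fun z _ => hasDerivAt_deriv_of_contDiff hF' (by simp) z) hL
    (hmem ((hC q hq).trans (le_max_left _ _))) (hmem ((hD q hq).trans (le_max_right _ _)))
  simpa using htaylor

end Domination

section FieldCalculus

variable {g h : ℝ × ℝ → ℝ} {F : ℝ → ℝ}

@[fun_prop]
lemma differentiable_of_contDiff_infty {E : Type*} [NormedAddCommGroup E] [NormedSpace ℝ E]
    {k : E → ℝ} (hk : ContDiff ℝ ∞ k) : Differentiable ℝ k :=
  hk.differentiable (by simp)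

@[fun_prop]
lemma contDiff_deriv_infty (hF : ContDiff ℝ ∞ F) : ContDiff ℝ ∞ (deriv F) := hF.deriv'

lemma spaceDeriv_add (hg : Differentiable ℝ g) (hh : Differentiable ℝ h) :
    ∂ₓ(fun q => g q + h q) = fun q => ∂ₓg q + ∂ₓh q :=
  funext fun q => ((hasDerivAt_spaceDeriv hg q.1 q.2).add (hasDerivAt_spaceDeriv hh q.1 q.2)).deriv

lemma timeDeriv_add (hg : Differentiable ℝ g) (hh : Differentiable ℝ h) :
    ∂ₜ(fun q => g q + h q) = fun q => ∂ₜg q + ∂ₜh q :=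
  funext fun q => ((hasDerivAt_timeDeriv hg q.1 q.2).add (hasDerivAt_timeDeriv hh q.1 q.2)).deriv

lemma spaceDeriv_sub (hg : Differentiable ℝ g) (hh : Differentiable ℝ h) :
    ∂ₓ(fun q => g q - h q) = fun q => ∂ₓg q - ∂ₓh q :=
  funext fun q => ((hasDerivAt_spaceDeriv hg q.1 q.2).sub (hasDerivAt_spaceDeriv hh q.1 q.2)).deriv

lemma spaceDeriv_mul (hg : Differentiable ℝ g) (hh : Differentiable ℝ h) :
    ∂ₓ(fun q => g q * h q) = fun q => ∂ₓg q * h q + g q * ∂ₓh q :=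
  funext fun q => ((hasDerivAt_spaceDeriv hg q.1 q.2).mul (hasDerivAt_spaceDeriv hh q.1 q.2)).deriv

lemma spaceDeriv_comp (hF : Differentiable ℝ F) (hg : Differentiable ℝ g) :
    ∂ₓ(fun q => F (g q)) = fun q => deriv F (g q) * ∂ₓg q :=
  funext fun q => ((hF (g q)).hasDerivAt.comp q.2 (hasDerivAt_spaceDeriv hg q.1 q.2)).deriv

lemma timeDeriv_comp (hF : Differentiable ℝ F) (hg : Differentiable ℝ g) :
    ∂ₜ(fun q => F (g q)) = fun q => deriv F (g q) * ∂ₜg q :=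
  funext fun q => ((hF (g q)).hasDerivAt.comp q.1 (hasDerivAt_timeDeriv hg q.1 q.2)).deriv

lemma timeDeriv_sq_div_two (hg : Differentiable ℝ g) :
    ∂ₜ(fun q => g q ^ 2 / 2) = fun q => g q * ∂ₜg q := by
  rw [timeDeriv_comp (F := fun s => s ^ 2 / 2) (by fun_prop) hg]
  simp

lemma spaceDeriv_eqOn_strip {T : ℝ} (hgh : EqOn g h (strip T)) : EqOn (∂ₓg) (∂ₓh) (strip T) :=
  fun q hq => congrArg (deriv · q.2) (funext fun y => hgh (x := (q.1, y)) ⟨hq.1, mem_univ y⟩)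

variable {ι : Type*} [Fintype ι] {T : ℝ} {G : ι → ℝ × ℝ → ℝ}

lemma isUniformlyL2_sum_abs (hG : ∀ i, IsUniformlyL2 T (G i)) :
    IsUniformlyL2 T fun q => ∑ i, |G i q| := by
  have hcont : Continuous fun q => ∑ i, |G i q| :=
    continuous_finsetSum _ fun i _ => (hG i).continuous.abs
  choose K hK using fun i => (hG i).exists_integral_sq_le
  have hle (q : ℝ × ℝ) : (∑ i, |G i q|) ^ 2 ≤ Fintype.card ι * ∑ i, G i q ^ 2 := by
    simpa only [sq_abs, Finset.card_univ] using
      sq_sum_le_card_mul_sum_sq (s := Finset.univ) (f := fun i => |G i q|)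
  have hint (t) (ht : t ∈ Icc 0 T) : Integrable fun x => Fintype.card ι * ∑ i, G i (t, x) ^ 2 :=
    (integrable_finsetSum _ fun i _ => (hG i).integrable_sq t ht).const_mul _
  have hsq (t) (ht : t ∈ Icc 0 T) : Integrable fun x => (∑ i, |G i (t, x)|) ^ 2 :=
    (hint t ht).mono' ((hcont.comp (Continuous.prodMk_right t)).pow 2).aestronglyMeasurable
      (.of_forall fun x => by
      simpa only [Real.norm_of_nonneg (sq_nonneg _)] using hle (t, x))
  refine ⟨hcont, hsq, Fintype.card ι * ∑ i, K i, fun t ht => ?_⟩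
  refine (integral_mono (hsq t ht) (hint t ht) fun x => hle (t, x)).trans ?_
  rw [MeasureTheory.integral_const_mul,
    integral_finsetSum _ fun i _ => (hG i).integrable_sq t ht]
  gcongr with i
  exact hK i t ht

lemma isBigO_sum_abs (l : Filter (ℝ × ℝ)) (i : ι) : G i =O[l] fun q => ∑ i, |G i q| :=
  .of_bound 1 (.of_forall fun q => by
    rw [one_mul, Real.norm_eq_abs, Real.norm_of_nonneg (by positivity)]
    exact Finset.single_le_sum (f := fun i => |G i q|) (fun _ _ => abs_nonneg _)
      (Finset.mem_univ i))

end FieldCalculus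

section EnergyMethod

variable {T t : ℝ} {e ψ H g : ℝ × ℝ → ℝ}

lemma setIntegral_slab_le_of_forall_integral_le_rpow {t r C : ℝ} {g : ℝ × ℝ → ℝ} (ht : 0 ≤ t)
    (hg : IntegrableOn g (slab t)) (hr : r < -1) (hC : 0 ≤ C)
    (hgC : ∀ s ∈ Icc 0 t, ∫ x, g (s, x) ≤ C * (1 + s) ^ r) :
    ∫ q in slab t, g q ≤ C * -(r + 1)⁻¹ :=
  calc ∫ q in slab t, g q
    _ ≤ ∫ s in 0..t, C * (1 + s) ^ r := setIntegral_slab_le_intervalIntegral ht hg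
        ((intervalIntegrable_one_add_rpow ht).const_mul C) hgC
    _ = C * ∫ s in 0..t, (1 + s) ^ r := intervalIntegral.integral_const_mul _ _
    _ ≤ C * -(r + 1)⁻¹ := mul_le_mul_of_nonneg_left (integral_one_add_rpow_le hr ht) hC

lemma integral_spaceDeriv_sq_div_two_le (he : IsUniformlyL2 T e) (hψ : ContDiff ℝ ∞ ψ)
    (hψx : ∂ₓψ =O[𝓟 (strip T)] e) (hψt : ∂ₜψ =O[𝓟 (strip T)] e)
    (hψxx : ∂ₓ∂ₓψ =O[𝓟 (strip T)] e) (ht : t ∈ Icc 0 T) (hH : IntegrableOn H (slab t))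
    (hle : ∀ q ∈ strip T, -(∂ₓ∂ₓψ q * ∂ₜψ q) ≤ H q) :
    ∫ x, ∂ₓψ (t, x) ^ 2 / 2 ≤ (∫ x, ∂ₓψ (0, x) ^ 2 / 2) + ∫ q in slab t, H q := by
  have hx : ContDiff ℝ 1 (∂ₓψ) := contDiff_infty.1 (contDiff_spaceDeriv hψ) 1
  have hxt : ContDiff ℝ 1 fun q => -∂ₓψ q * ∂ₜψ q :=
    hx.neg.mul (contDiff_infty.1 (contDiff_timeDeriv hψ) 1)
  refine integral_le_integral_add_setIntegral_slab he ((hx.pow 2).div_const 2) hxt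
    (((hψx.pow 2).const_mul_left 2⁻¹).congr_left fun q => by ring)
    (isBigO_mul_sq hψx.neg_left hψt) (fun q _ => ?_) (isBigO_mul_sq hψxx hψt).neg_left ht hH hle
  have hneg : ∂ₓ(fun q => -∂ₓψ q) q = -∂ₓ∂ₓψ q := by simp [spaceDeriv]
  rw [timeDeriv_sq_div_two (by fun_prop), spaceDeriv_mul (by fun_prop) (by fun_prop),
    timeDeriv_spaceDeriv (contDiff_infty.1 hψ 2)]
  simp only [hneg]
  ring

end EnergyMethod

/-! ### Perturbed rarefaction waves -/

/-- The data of the problem on which the constant of the energy estimate may depend: the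
ellipticity exponent and constants of the viscosity, the far-field states `um`, `up` and the decay
constant `CU` of the wave, a bound `M` for the initial perturbation, and the flux `f`. -/
structure RarefactionData where
  p : ℝ
  c₁ : ℝ
  c₂ : ℝ
  um : ℝ
  up : ℝ
  CU : ℝ
  M : ℝ
  f : ℝ → ℝ
  p_le_one : p ≤ 1
  c₁_pos : 0 < c₁
  contDiff_f : ContDiff ℝ ∞ f
  convexOn_f : ConvexOn ℝ univ f

namespace RarefactionData

variable (P : RarefactionData)

/-- The bound for `|u|` provided by the maximum principle. -/
noncomputable def R : ℝ := |P.um| + |P.up| + P.M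

/-- A common bound for `|f'|` and `|f''|` on the range `[-R, R]` of the solution. -/
noncomputable def L : ℝ :=
  sSup ((fun v => max |deriv P.f v| |deriv (deriv P.f) v|) '' Icc (-P.R) P.R)

/-- The loss in the weight when `∂ₓφ` is shifted by `∂ₓU`. -/
noncomputable def κ : ℝ := (2 + 2 * P.CU ^ 2) ^ ((1 - P.p) / 2)

/-- The lower ellipticity constant: `α * weight p (∂ₓφ) ≤ σ'(∂ₓu)`. -/
noncomputable def α : ℝ := P.c₁ / P.κ

/-- The upper ellipticity constant: `σ'(∂ₓu) ≤ β * weight p (∂ₓφ)`. -/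
noncomputable def β : ℝ := P.c₂ * P.κ

lemma κ_pos : 0 < P.κ := Real.rpow_pos_of_pos (by positivity) _

lemma α_pos : 0 < P.α := div_pos P.c₁_pos P.κ_pos

variable {P} {v : ℝ}

lemma max_abs_deriv_f_le (hv : |v| ≤ P.R) :
    max |deriv P.f v| |deriv (deriv P.f) v| ≤ P.L := by
  have hf' : ContDiff ℝ ∞ (deriv P.f) := contDiff_deriv_infty P.contDiff_f
  have hcont : Continuous fun v => max |deriv P.f v| |deriv (deriv P.f) v| :=
    hf'.continuous.abs.max (contDiff_deriv_infty hf').continuous.abs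
  exact le_csSup (isCompact_Icc.bddAbove_image hcont.continuousOn)
    (mem_image_of_mem _ (abs_le.1 hv))

lemma abs_deriv_f_le (hv : |v| ≤ P.R) : |deriv P.f v| ≤ P.L :=
  (le_max_left _ _).trans (max_abs_deriv_f_le hv)

lemma abs_deriv_deriv_f_le (hv : |v| ≤ P.R) : |deriv (deriv P.f) v| ≤ P.L :=
  (le_max_right _ _).trans (max_abs_deriv_f_le hv)

lemma abs_deriv_f_sub_le {v v' : ℝ} (hv : |v| ≤ P.R) (hv' : |v'| ≤ P.R) :
    |deriv P.f v' - deriv P.f v| ≤ P.L * |v' - v| :=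
  (convex_Icc (-P.R) P.R).norm_image_sub_le_of_norm_deriv_le (f := deriv P.f)
    (fun _ _ => (differentiable_of_contDiff_infty (contDiff_deriv_infty P.contDiff_f)) _)
    (fun _ hz => abs_deriv_deriv_f_le (abs_le.2 hz)) (abs_le.1 hv) (abs_le.1 hv')

end RarefactionData

/-- A smooth solution `U + φ` on `[0, T] × ℝ` of the viscous conservation law
`∂ₜu + ∂ₓ(f(u)) = ∂ₓ(σ(∂ₓu))`, written as a perturbation of the smoothed rarefaction wave `U`. The
bounds `exists_bound` and `exists_integral_sq_le` are qualitative: the constant of the energy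
estimate does not depend on them. -/
structure PerturbedRarefaction (P : RarefactionData) where
  T : ℝ
  σ : ℝ → ℝ
  U : ℝ × ℝ → ℝ
  φ : ℝ × ℝ → ℝ
  contDiff_σ : ContDiff ℝ ∞ σ
  deriv_σ_bounds (v : ℝ) : P.c₁ * weight P.p v ≤ deriv σ v ∧ deriv σ v ≤ P.c₂ * weight P.p v
  contDiff_U : ContDiff ℝ ∞ U
  rarefaction_eq : ∀ q ∈ strip T, ∂ₜU q + ∂ₓ(fun q => P.f (U q)) q = 0
  U_mem_Icc : ∀ q ∈ strip T, U q ∈ Icc P.um P.up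
  Ux_nonneg : ∀ q ∈ strip T, 0 ≤ ∂ₓU q
  Ux_le : ∀ q ∈ strip T, ∂ₓU q ≤ P.CU * (1 + q.1)⁻¹
  L2norm_Ux_le : ∀ t ∈ Icc 0 T, L2norm (fun x => ∂ₓU (t, x)) ≤ P.CU * (1 + t) ^ (-(1 : ℝ) / 2)
  Uxx_le : ∀ t ∈ Icc 0 T, ∀ x,
    L2norm (fun x => ∂ₓ∂ₓU (t, x)) + |∂ₓ∂ₓU (t, x)| ≤ P.CU * (1 + t) ^ (-(9 : ℝ) / 8)
  Uxt_le : ∀ t ∈ Icc 0 T, ∀ x,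
    L2norm (fun x => ∂ₜ∂ₓU (t, x)) + |∂ₜ∂ₓU (t, x)| ≤ P.CU * (1 + t)⁻¹
  contDiff_φ : ContDiff ℝ ∞ φ
  perturbation_eq : ∀ q ∈ strip T,
    ∂ₜφ q + ∂ₓ(fun q => P.f (U q + φ q) - P.f (U q)) q
      - ∂ₓ(fun q => σ (∂ₓU q + ∂ₓφ q) - σ (∂ₓU q)) q = ∂ₓ(fun q => σ (∂ₓU q)) q
  exists_bound : ∃ B, ∀ q ∈ strip T,
    |φ q| + |∂ₓφ q| + |∂ₓ∂ₓφ q| + |∂ₓ∂ₓ∂ₓφ q| + |∂ₜ∂ₓφ q| ≤ B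
  integrable_sq : ∀ t ∈ Icc 0 T,
    Integrable (fun x => φ (t, x) ^ 2) ∧ Integrable (fun x => ∂ₓφ (t, x) ^ 2) ∧
    Integrable (fun x => ∂ₓ∂ₓφ (t, x) ^ 2) ∧ Integrable (fun x => ∂ₜ∂ₓφ (t, x) ^ 2)
  exists_integral_sq_le : ∃ B, ∀ t ∈ Icc 0 T,
    (∫ x, φ (t, x) ^ 2) + (∫ x, ∂ₓφ (t, x) ^ 2) + (∫ x, ∂ₓ∂ₓφ (t, x) ^ 2)
      + (∫ x, ∂ₜ∂ₓφ (t, x) ^ 2) ≤ B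
  initial_le : L2norm (fun x => φ (0, x)) + L2norm (fun x => ∂ₓφ (0, x))
    + L2norm (fun x => ∂ₓ∂ₓφ (0, x)) + (⨆ x, |φ (0, x)|) ≤ P.M

namespace PerturbedRarefaction

section Equations

variable {P : RarefactionData} (S : PerturbedRarefaction P)

attribute [fun_prop] RarefactionData.contDiff_f contDiff_σ contDiff_U contDiff_φ

/-- The full solution `u = U + φ`. -/
def u (q : ℝ × ℝ) : ℝ := S.U q + S.φ q

/-- The viscous flux `w = σ(∂ₓu)`. -/
noncomputable def w (q : ℝ × ℝ) : ℝ := S.σ (∂ₓS.u q)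

@[fun_prop]
lemma contDiff_u : ContDiff ℝ ∞ S.u := S.contDiff_U.add S.contDiff_φ

@[fun_prop]
lemma contDiff_w : ContDiff ℝ ∞ S.w := by
  unfold w
  fun_prop

lemma spaceDeriv_u : ∂ₓS.u = fun q => ∂ₓS.U q + ∂ₓS.φ q :=
  spaceDeriv_add (by fun_prop) (by fun_prop)

lemma spaceDeriv_spaceDeriv_u : ∂ₓ∂ₓS.u = fun q => ∂ₓ∂ₓS.U q + ∂ₓ∂ₓS.φ q := by
  rw [spaceDeriv_u, spaceDeriv_add (by fun_prop) (by fun_prop)]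

lemma timeDeriv_spaceDeriv_u : ∂ₜ∂ₓS.u = fun q => ∂ₜ∂ₓS.U q + ∂ₜ∂ₓS.φ q := by
  rw [spaceDeriv_u, timeDeriv_add (by fun_prop) (by fun_prop)]

lemma spaceDeriv_w : ∂ₓS.w = fun q => deriv S.σ (∂ₓS.u q) * ∂ₓ∂ₓS.u q :=
  spaceDeriv_comp (by fun_prop) (by fun_prop)

lemma timeDeriv_w : ∂ₜS.w = fun q => deriv S.σ (∂ₓS.u q) * ∂ₜ∂ₓS.u q :=
  timeDeriv_comp (by fun_prop) (by fun_prop)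

variable {S}

lemma timeDeriv_U {q : ℝ × ℝ} (hq : q ∈ strip S.T) : ∂ₜS.U q = -(deriv P.f (S.U q) * ∂ₓS.U q) := by
  have heq := S.rarefaction_eq q hq
  rw [spaceDeriv_comp (by fun_prop) (by fun_prop)] at heq
  linarith

lemma timeDeriv_φ {q : ℝ × ℝ} (hq : q ∈ strip S.T) :
    ∂ₜS.φ q = ∂ₓS.w q - deriv P.f (S.u q) * ∂ₓS.φ q
      - (deriv P.f (S.u q) - deriv P.f (S.U q)) * ∂ₓS.U q := by
  have heq := S.perturbation_eq q hq
  have hu : (fun q => S.σ (∂ₓS.U q + ∂ₓS.φ q)) = S.w := by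
    unfold w
    simp only [spaceDeriv_u]
  have hfu : ∂ₓ(fun q => P.f (S.U q + S.φ q)) = fun q => deriv P.f (S.u q) * ∂ₓS.u q :=
    spaceDeriv_comp (g := S.u) (by fun_prop) (by fun_prop)
  rw [spaceDeriv_sub (by fun_prop) (by fun_prop), hfu, spaceDeriv_sub (by fun_prop) (by fun_prop),
    hu, spaceDeriv_comp (by fun_prop) (by fun_prop), spaceDeriv_u] at heq
  linarith

lemma timeDeriv_u {q : ℝ × ℝ} (hq : q ∈ strip S.T) :
    ∂ₜS.u q = ∂ₓS.w q - deriv P.f (S.u q) * ∂ₓS.u q := by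
  have hadd : ∂ₜS.u = fun q => ∂ₜS.U q + ∂ₜS.φ q := timeDeriv_add (by fun_prop) (by fun_prop)
  rw [hadd, spaceDeriv_u]
  linarith [timeDeriv_φ hq, timeDeriv_U hq]

lemma spaceDeriv_spaceDeriv_w {q : ℝ × ℝ} (hq : q ∈ strip S.T) :
    ∂ₓ∂ₓS.w q = ∂ₜ∂ₓS.u q
      + (deriv (deriv P.f) (S.u q) * ∂ₓS.u q ^ 2 + deriv P.f (S.u q) * ∂ₓ∂ₓS.u q) := by
  have heq : EqOn (∂ₓS.w) (fun q => ∂ₜS.u q + deriv P.f (S.u q) * ∂ₓS.u q) (strip S.T) :=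
    fun q hq => by linarith [timeDeriv_u hq]
  rw [spaceDeriv_eqOn_strip heq hq, spaceDeriv_add (by fun_prop) (by fun_prop),
    spaceDeriv_mul (by fun_prop) (by fun_prop), spaceDeriv_comp (by fun_prop) (by fun_prop),
    timeDeriv_spaceDeriv (contDiff_infty.1 S.contDiff_u 2)]
  ring

lemma timeDeriv_spaceDeriv_U {q : ℝ × ℝ} (hq : q ∈ strip S.T) :
    ∂ₜ∂ₓS.U q = -(deriv (deriv P.f) (S.U q) * ∂ₓS.U q ^ 2 + deriv P.f (S.U q) * ∂ₓ∂ₓS.U q) := by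
  have heq : EqOn (∂ₜS.U) (fun q => (-deriv P.f (S.U q)) * ∂ₓS.U q) (strip S.T) :=
    fun q hq => by linarith [timeDeriv_U hq]
  rw [timeDeriv_spaceDeriv (contDiff_infty.1 S.contDiff_U 2), spaceDeriv_eqOn_strip heq hq]
  have hneg : ∂ₓ(fun q => -deriv P.f (S.U q)) = fun q => -deriv (deriv P.f) (S.U q) * ∂ₓS.U q := by
    rw [spaceDeriv_comp (F := fun v => -deriv P.f v) (by fun_prop) (by fun_prop)]
    simp
  rw [spaceDeriv_mul (by fun_prop) (by fun_prop), hneg]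
  ring

end Equations

section Bounds

variable {P : RarefactionData} (S : PerturbedRarefaction P) {t : ℝ} {q : ℝ × ℝ}

lemma bounded_φ_derivatives : ∀ g ∈ [S.φ, ∂ₓS.φ, ∂ₓ∂ₓS.φ, ∂ₓ∂ₓ∂ₓS.φ, ∂ₜ∂ₓS.φ],
    g =O[𝓟 (strip S.T)] fun _ => (1 : ℝ) := by
  obtain ⟨B, hB⟩ := S.exists_bound
  simp only [List.forall_mem_cons, List.not_mem_nil, false_imp_iff, implies_true, and_true]
  refine ⟨?_, ?_, ?_, ?_, ?_⟩ <;> refine isBigO_one_principal_iff.2 ⟨B, fun q hq => ?_⟩ <;>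
    linarith [hB q hq, abs_nonneg (S.φ q), abs_nonneg (∂ₓS.φ q), abs_nonneg (∂ₓ∂ₓS.φ q),
      abs_nonneg (∂ₓ∂ₓ∂ₓS.φ q), abs_nonneg (∂ₜ∂ₓS.φ q)]

lemma bounded_φ : S.φ =O[𝓟 (strip S.T)] fun _ => (1 : ℝ) := S.bounded_φ_derivatives _ (by simp)

lemma bounded_φx : ∂ₓS.φ =O[𝓟 (strip S.T)] fun _ => (1 : ℝ) :=
  S.bounded_φ_derivatives _ (by simp)

lemma bounded_φxx : ∂ₓ∂ₓS.φ =O[𝓟 (strip S.T)] fun _ => (1 : ℝ) :=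
  S.bounded_φ_derivatives _ (by simp)

lemma bounded_φxxx : ∂ₓ∂ₓ∂ₓS.φ =O[𝓟 (strip S.T)] fun _ => (1 : ℝ) :=
  S.bounded_φ_derivatives _ (by simp)

lemma bounded_φxt : ∂ₜ∂ₓS.φ =O[𝓟 (strip S.T)] fun _ => (1 : ℝ) :=
  S.bounded_φ_derivatives _ (by simp)

lemma bounded_U : S.U =O[𝓟 (strip S.T)] fun _ => (1 : ℝ) :=
  isBigO_one_principal_iff.2 ⟨max |P.um| |P.up|, fun q hq =>
    abs_le_max_abs_abs (S.U_mem_Icc q hq).1 (S.U_mem_Icc q hq).2⟩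

variable {S}

lemma CU_nonneg (ht : t ∈ Icc 0 S.T) : 0 ≤ P.CU := by
  have hq : ((t, 0) : ℝ × ℝ) ∈ strip S.T := mk_mem_strip.2 ht
  exact nonneg_of_mul_nonneg_left ((S.Ux_nonneg _ hq).trans (S.Ux_le _ hq))
    (inv_pos.2 (by linarith [ht.1]))

lemma abs_Ux_le (hq : q ∈ strip S.T) : |∂ₓS.U q| ≤ P.CU := by
  rw [abs_of_nonneg (S.Ux_nonneg q hq)]
  exact (S.Ux_le q hq).trans (mul_le_of_le_one_right (CU_nonneg hq.1)
    (inv_le_one_of_one_le₀ (by linarith [hq.1.1])))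

lemma abs_Uxx_le (hq : q ∈ strip S.T) : |∂ₓ∂ₓS.U q| ≤ P.CU :=
  ((le_add_of_nonneg_left (L2norm_nonneg _)).trans (S.Uxx_le q.1 hq.1 q.2)).trans
    (mul_le_of_le_one_right (CU_nonneg hq.1) (one_add_rpow_le_one hq.1.1 (by norm_num)))

lemma abs_Uxt_le (hq : q ∈ strip S.T) : |∂ₜ∂ₓS.U q| ≤ P.CU :=
  ((le_add_of_nonneg_left (L2norm_nonneg _)).trans (S.Uxt_le q.1 hq.1 q.2)).trans
    (mul_le_of_le_one_right (CU_nonneg hq.1) (inv_le_one_of_one_le₀ (by linarith [hq.1.1])))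

variable (S)

lemma bounded_Ux : ∂ₓS.U =O[𝓟 (strip S.T)] fun _ => (1 : ℝ) :=
  isBigO_one_principal_iff.2 ⟨P.CU, fun _ => abs_Ux_le⟩

lemma bounded_Uxx : ∂ₓ∂ₓS.U =O[𝓟 (strip S.T)] fun _ => (1 : ℝ) :=
  isBigO_one_principal_iff.2 ⟨P.CU, fun _ => abs_Uxx_le⟩

lemma bounded_Uxt : ∂ₜ∂ₓS.U =O[𝓟 (strip S.T)] fun _ => (1 : ℝ) :=
  isBigO_one_principal_iff.2 ⟨P.CU, fun _ => abs_Uxt_le⟩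

lemma bounded_u : S.u =O[𝓟 (strip S.T)] fun _ => (1 : ℝ) := S.bounded_U.add S.bounded_φ

lemma bounded_ux : ∂ₓS.u =O[𝓟 (strip S.T)] fun _ => (1 : ℝ) := by
  rw [spaceDeriv_u]
  exact S.bounded_Ux.add S.bounded_φx

lemma bounded_uxx : ∂ₓ∂ₓS.u =O[𝓟 (strip S.T)] fun _ => (1 : ℝ) := by
  rw [spaceDeriv_spaceDeriv_u]
  exact S.bounded_Uxx.add S.bounded_φxx

lemma bounded_uxt : ∂ₜ∂ₓS.u =O[𝓟 (strip S.T)] fun _ => (1 : ℝ) := by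
  rw [timeDeriv_spaceDeriv_u]
  exact S.bounded_Uxt.add S.bounded_φxt

lemma bounded_comp_u {F : ℝ → ℝ} (hF : Continuous F) :
    (fun q => F (S.u q)) =O[𝓟 (strip S.T)] fun _ => (1 : ℝ) :=
  isBigO_one_comp S.bounded_u hF

lemma bounded_comp_ux {F : ℝ → ℝ} (hF : Continuous F) :
    (fun q => F (∂ₓS.u q)) =O[𝓟 (strip S.T)] fun _ => (1 : ℝ) :=
  isBigO_one_comp S.bounded_ux hF

lemma deriv_σ_pos (v : ℝ) : 0 < deriv S.σ v :=
  (mul_pos P.c₁_pos (weight_pos P.p v)).trans_le (S.deriv_σ_bounds v).1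

lemma bounded_wxx : ∂ₓ∂ₓS.w =O[𝓟 (strip S.T)] fun _ => (1 : ℝ) := by
  have hbound : (fun q => ∂ₜ∂ₓS.u q + (deriv (deriv P.f) (S.u q) * ∂ₓS.u q ^ 2
      + deriv P.f (S.u q) * ∂ₓ∂ₓS.u q)) =O[𝓟 (strip S.T)] fun _ => (1 : ℝ) :=
    S.bounded_uxt.add <| .add
      (isBigO_bounded_mul (S.bounded_comp_u (by fun_prop))
        (S.bounded_comp_ux (F := fun v => v ^ 2) (by fun_prop)))
      (isBigO_bounded_mul (S.bounded_comp_u (by fun_prop)) S.bounded_uxx)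
  exact hbound.congr' (eventually_principal.2 fun q hq => (spaceDeriv_spaceDeriv_w hq).symm) .rfl

/-- `u_xxx` is recovered from the equation, by dividing by `σ'(u_x)`. -/
lemma bounded_uxxx : ∂ₓ∂ₓ∂ₓS.u =O[𝓟 (strip S.T)] fun _ => (1 : ℝ) := by
  have hne (v : ℝ) : deriv S.σ v ≠ 0 := (S.deriv_σ_pos v).ne'
  have hformula : ∂ₓ∂ₓ∂ₓS.u = fun q => (deriv S.σ (∂ₓS.u q))⁻¹
      * (∂ₓ∂ₓS.w q - deriv (deriv S.σ) (∂ₓS.u q) * (∂ₓ∂ₓS.u q * ∂ₓ∂ₓS.u q)) := by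
    rw [spaceDeriv_w, spaceDeriv_mul (by fun_prop) (by fun_prop),
      spaceDeriv_comp (by fun_prop) (by fun_prop)]
    funext q
    field_simp [hne (∂ₓS.u q)]
    ring
  rw [hformula]
  exact isBigO_bounded_mul
    (S.bounded_comp_ux (F := fun v => (deriv S.σ v)⁻¹) (.inv₀ (by fun_prop) hne))
    (S.bounded_wxx.sub (isBigO_bounded_mul (S.bounded_comp_ux (by fun_prop))
      (isBigO_bounded_mul S.bounded_uxx S.bounded_uxx)))

lemma bounded_Uxxx : ∂ₓ∂ₓ∂ₓS.U =O[𝓟 (strip S.T)] fun _ => (1 : ℝ) := by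
  have hsplit : ∂ₓ∂ₓ∂ₓS.u = fun q => ∂ₓ∂ₓ∂ₓS.U q + ∂ₓ∂ₓ∂ₓS.φ q := by
    rw [spaceDeriv_spaceDeriv_u, spaceDeriv_add (by fun_prop) (by fun_prop)]
  simpa [hsplit] using S.bounded_uxxx.sub S.bounded_φxxx

end Bounds

section Envelope

variable {P : RarefactionData} {S : PerturbedRarefaction P} {t : ℝ}

lemma integrable_Ux (ht : t ∈ Icc 0 S.T) : Integrable fun x => ∂ₓS.U (t, x) := by
  obtain ⟨B, hB⟩ := isBigO_one_principal_iff.1 S.bounded_U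
  have hmem (x : ℝ) : (t, x) ∈ strip S.T := mk_mem_strip.2 ht
  exact integrable_of_hasDerivAt_nonneg_of_abs_le (hasDerivAt_spaceDeriv (by fun_prop) t)
    (by fun_prop) (fun x => S.Ux_nonneg _ (hmem x)) fun x => hB _ (hmem x)

lemma integrable_Ux_sq (ht : t ∈ Icc 0 S.T) : Integrable fun x => ∂ₓS.U (t, x) ^ 2 := by
  refine ((integrable_Ux ht).const_mul P.CU).mono' (by fun_prop) (.of_forall fun x => ?_)
  have hq : (t, x) ∈ strip S.T := mk_mem_strip.2 ht
  rw [norm_pow, Real.norm_eq_abs, sq_abs, sq]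
  exact mul_le_mul_of_nonneg_right ((le_abs_self _).trans (abs_Ux_le hq)) (S.Ux_nonneg _ hq)

lemma integrable_Uxx_sq (ht : t ∈ Icc 0 S.T) : Integrable fun x => ∂ₓ∂ₓS.U (t, x) ^ 2 := by
  obtain ⟨L, hL⟩ := isBigO_one_principal_iff.1 S.bounded_Uxxx
  refine ((integrable_Ux ht).const_mul (4 * L)).mono' (by fun_prop) (.of_forall fun x => ?_)
  rw [norm_pow, Real.norm_eq_abs, sq_abs]
  exact deriv_sq_le_of_nonneg (hasDerivAt_spaceDeriv (by fun_prop) t)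
    (hasDerivAt_spaceDeriv (by fun_prop) t) (fun x => S.Ux_nonneg _ (mk_mem_strip.2 ht))
    (fun x => hL _ (mk_mem_strip.2 ht)) x

lemma integral_Ux_sq_le (ht : t ∈ Icc 0 S.T) : ∫ x, ∂ₓS.U (t, x) ^ 2 ≤ P.CU ^ 2 :=
  integral_sq_le_of_L2norm_le <| (S.L2norm_Ux_le t ht).trans
    (mul_le_of_le_one_right (CU_nonneg ht) (one_add_rpow_le_one ht.1 (by norm_num)))

lemma integral_Uxx_sq_le (ht : t ∈ Icc 0 S.T) :
    ∫ x, ∂ₓ∂ₓS.U (t, x) ^ 2 ≤ (P.CU * (1 + t) ^ (-(9 : ℝ) / 8)) ^ 2 :=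
  integral_sq_le_of_L2norm_le
    ((le_add_of_nonneg_right (abs_nonneg _)).trans (S.Uxx_le t ht 0))

lemma integral_Uxx_sq_le_CU_sq (ht : t ∈ Icc 0 S.T) : ∫ x, ∂ₓ∂ₓS.U (t, x) ^ 2 ≤ P.CU ^ 2 :=
  (integral_Uxx_sq_le ht).trans
    (pow_le_pow_left₀ (mul_nonneg (CU_nonneg ht) (Real.rpow_nonneg (by linarith [ht.1]) _))
      (mul_le_of_le_one_right (CU_nonneg ht) (one_add_rpow_le_one ht.1 (by norm_num))) 2)

lemma integral_Uxt_sq_le (ht : t ∈ Icc 0 S.T) :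
    ∫ x, ∂ₜ∂ₓS.U (t, x) ^ 2 ≤ (P.CU * (1 + t)⁻¹) ^ 2 :=
  integral_sq_le_of_L2norm_le
    ((le_add_of_nonneg_right (abs_nonneg _)).trans (S.Uxt_le t ht 0))

variable (S)

/-- The fields out of which, up to bounded factors, every term of the energy identities is a sum
of products of two. -/
noncomputable def basicFields : Fin 6 → ℝ × ℝ → ℝ :=
  ![S.φ, ∂ₓS.φ, ∂ₓ∂ₓS.φ, ∂ₜ∂ₓS.φ, ∂ₓS.U, ∂ₓ∂ₓS.U]

/-- A uniformly `L²` majorant of the basic fields. -/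
noncomputable def envelope (q : ℝ × ℝ) : ℝ := ∑ i, |S.basicFields i q|

lemma isUniformlyL2_φ_derivatives : IsUniformlyL2 S.T S.φ ∧ IsUniformlyL2 S.T (∂ₓS.φ) ∧
    IsUniformlyL2 S.T (∂ₓ∂ₓS.φ) ∧ IsUniformlyL2 S.T (∂ₜ∂ₓS.φ) := by
  obtain ⟨B, hB⟩ := S.exists_integral_sq_le
  have hnonneg (g : ℝ → ℝ) : 0 ≤ ∫ x, g x ^ 2 := integral_nonneg fun _ => sq_nonneg _
  refine ⟨⟨by fun_prop, fun t ht => (S.integrable_sq t ht).1, B, fun t ht => ?_⟩,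
    ⟨by fun_prop, fun t ht => (S.integrable_sq t ht).2.1, B, fun t ht => ?_⟩,
    ⟨by fun_prop, fun t ht => (S.integrable_sq t ht).2.2.1, B, fun t ht => ?_⟩,
    ⟨by fun_prop, fun t ht => (S.integrable_sq t ht).2.2.2, B, fun t ht => ?_⟩⟩ <;>
    linarith [hB t ht, hnonneg fun x => S.φ (t, x), hnonneg fun x => ∂ₓS.φ (t, x),
      hnonneg fun x => ∂ₓ∂ₓS.φ (t, x), hnonneg fun x => ∂ₜ∂ₓS.φ (t, x)]

lemma isUniformlyL2_Ux : IsUniformlyL2 S.T (∂ₓS.U) :=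
  ⟨by fun_prop, fun _ => integrable_Ux_sq, P.CU ^ 2, fun _ => integral_Ux_sq_le⟩

lemma isUniformlyL2_Uxx : IsUniformlyL2 S.T (∂ₓ∂ₓS.U) :=
  ⟨by fun_prop, fun _ => integrable_Uxx_sq, P.CU ^ 2, fun _ => integral_Uxx_sq_le_CU_sq⟩

lemma isUniformlyL2_basicFields (i : Fin 6) : IsUniformlyL2 S.T (S.basicFields i) := by
  obtain ⟨hφ, hφx, hφxx, hφxt⟩ := S.isUniformlyL2_φ_derivatives
  fin_cases i
  exacts [hφ, hφx, hφxx, hφxt, S.isUniformlyL2_Ux, S.isUniformlyL2_Uxx]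

lemma isUniformlyL2_envelope : IsUniformlyL2 S.T S.envelope :=
  isUniformlyL2_sum_abs S.isUniformlyL2_basicFields

lemma isBigO_φ : S.φ =O[𝓟 (strip S.T)] S.envelope := isBigO_sum_abs (G := S.basicFields) _ 0

lemma isBigO_φx : ∂ₓS.φ =O[𝓟 (strip S.T)] S.envelope := isBigO_sum_abs (G := S.basicFields) _ 1

lemma isBigO_φxx : ∂ₓ∂ₓS.φ =O[𝓟 (strip S.T)] S.envelope :=
  isBigO_sum_abs (G := S.basicFields) _ 2

lemma isBigO_φxt : ∂ₜ∂ₓS.φ =O[𝓟 (strip S.T)] S.envelope :=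
  isBigO_sum_abs (G := S.basicFields) _ 3

lemma isBigO_Ux : ∂ₓS.U =O[𝓟 (strip S.T)] S.envelope := isBigO_sum_abs (G := S.basicFields) _ 4

lemma isBigO_Uxx : ∂ₓ∂ₓS.U =O[𝓟 (strip S.T)] S.envelope :=
  isBigO_sum_abs (G := S.basicFields) _ 5

lemma isBigO_ux : ∂ₓS.u =O[𝓟 (strip S.T)] S.envelope := by
  rw [spaceDeriv_u]
  exact S.isBigO_Ux.add S.isBigO_φx

lemma isBigO_uxx : ∂ₓ∂ₓS.u =O[𝓟 (strip S.T)] S.envelope := by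
  rw [spaceDeriv_spaceDeriv_u]
  exact S.isBigO_Uxx.add S.isBigO_φxx

lemma isBigO_Uxt : ∂ₜ∂ₓS.U =O[𝓟 (strip S.T)] S.envelope := by
  have hbound : (fun q => -(deriv (deriv P.f) (S.U q) * (∂ₓS.U q * ∂ₓS.U q)
      + deriv P.f (S.U q) * ∂ₓ∂ₓS.U q)) =O[𝓟 (strip S.T)] S.envelope :=
    .neg_left <| .add
      (isBigO_bounded_mul (isBigO_one_comp S.bounded_U (by fun_prop))
        (isBigO_bounded_mul S.bounded_Ux S.isBigO_Ux))
      (isBigO_bounded_mul (isBigO_one_comp S.bounded_U (by fun_prop)) S.isBigO_Uxx)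
  refine hbound.congr' (eventually_principal.2 fun q hq => ?_) .rfl
  rw [timeDeriv_spaceDeriv_U hq, sq]

lemma isBigO_uxt : ∂ₜ∂ₓS.u =O[𝓟 (strip S.T)] S.envelope := by
  rw [timeDeriv_spaceDeriv_u]
  exact S.isBigO_Uxt.add S.isBigO_φxt

lemma isBigO_wx : ∂ₓS.w =O[𝓟 (strip S.T)] S.envelope := by
  rw [spaceDeriv_w]
  exact isBigO_bounded_mul (S.bounded_comp_ux (by fun_prop)) S.isBigO_uxx

lemma isBigO_wt : ∂ₜS.w =O[𝓟 (strip S.T)] S.envelope := by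
  rw [timeDeriv_w]
  exact isBigO_bounded_mul (S.bounded_comp_ux (by fun_prop)) S.isBigO_uxt

lemma isBigO_wxx : ∂ₓ∂ₓS.w =O[𝓟 (strip S.T)] S.envelope := by
  have hbound : (fun q => ∂ₜ∂ₓS.u q + (deriv (deriv P.f) (S.u q) * (∂ₓS.u q * ∂ₓS.u q)
      + deriv P.f (S.u q) * ∂ₓ∂ₓS.u q)) =O[𝓟 (strip S.T)] S.envelope :=
    S.isBigO_uxt.add <| .add
      (isBigO_bounded_mul (S.bounded_comp_u (by fun_prop))
        (isBigO_bounded_mul S.bounded_ux S.isBigO_ux))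
      (isBigO_bounded_mul (S.bounded_comp_u (by fun_prop)) S.isBigO_uxx)
  refine hbound.congr' (eventually_principal.2 fun q hq => ?_) .rfl
  rw [spaceDeriv_spaceDeriv_w hq, sq]

lemma isBigO_comp_u_sub {F : ℝ → ℝ} (hF : ContDiff ℝ 1 F) :
    (fun q => F (S.u q) - F (S.U q)) =O[𝓟 (strip S.T)] S.φ :=
  isBigO_comp_add_sub_comp hF S.bounded_U S.bounded_φ

lemma isBigO_w_sub : (fun q => S.w q - S.σ (∂ₓS.U q)) =O[𝓟 (strip S.T)] ∂ₓS.φ := by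
  unfold w
  rw [spaceDeriv_u]
  exact isBigO_comp_add_sub_comp (contDiff_infty.1 S.contDiff_σ 1) S.bounded_Ux S.bounded_φx

lemma isBigO_φt : ∂ₜS.φ =O[𝓟 (strip S.T)] S.envelope := by
  have hf' := S.isBigO_comp_u_sub (contDiff_infty.1 (contDiff_deriv_infty P.contDiff_f) 1)
  have hbound : (fun q => ∂ₓS.w q - deriv P.f (S.u q) * ∂ₓS.φ q
      - ∂ₓS.U q * (deriv P.f (S.u q) - deriv P.f (S.U q))) =O[𝓟 (strip S.T)] S.envelope :=
    (S.isBigO_wx.sub (isBigO_bounded_mul (S.bounded_comp_u (by fun_prop)) S.isBigO_φx)).sub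
      (isBigO_bounded_mul S.bounded_Ux (hf'.trans S.isBigO_φ))
  refine hbound.congr' (eventually_principal.2 fun q hq => ?_) .rfl
  rw [timeDeriv_φ hq]
  ring

end Envelope

/-! ### Maximum principle -/

section MaximumPrinciple

variable {P : RarefactionData} {S : PerturbedRarefaction P} {t : ℝ} {q : ℝ × ℝ}

lemma bddAbove_range_abs_φ (ht : t ∈ Icc 0 S.T) : BddAbove (range fun x => |S.φ (t, x)|) := by
  obtain ⟨B, hB⟩ := isBigO_one_principal_iff.1 S.bounded_φ
  exact ⟨B, forall_mem_range.2 fun x => hB _ (mk_mem_strip.2 ht)⟩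

lemma abs_φ_zero_le (hT : 0 ≤ S.T) (x : ℝ) : |S.φ (0, x)| ≤ P.M := by
  have hsup := le_ciSup (bddAbove_range_abs_φ (left_mem_Icc.2 hT)) x
  linarith [S.initial_le, L2norm_nonneg fun x => S.φ (0, x), L2norm_nonneg fun x => ∂ₓS.φ (0, x),
    L2norm_nonneg fun x => ∂ₓ∂ₓS.φ (0, x)]

lemma integral_initial_sq_le : (∫ x, S.φ (0, x) ^ 2) ≤ P.M ^ 2 ∧
    (∫ x, ∂ₓS.φ (0, x) ^ 2) ≤ P.M ^ 2 ∧ (∫ x, ∂ₓ∂ₓS.φ (0, x) ^ 2) ≤ P.M ^ 2 := by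
  have hsup : 0 ≤ ⨆ x, |S.φ (0, x)| := Real.iSup_nonneg fun _ => abs_nonneg _
  refine ⟨integral_sq_le_of_L2norm_le ?_, integral_sq_le_of_L2norm_le ?_,
    integral_sq_le_of_L2norm_le ?_⟩ <;>
  linarith [S.initial_le, L2norm_nonneg fun x => S.φ (0, x), L2norm_nonneg fun x => ∂ₓS.φ (0, x),
    L2norm_nonneg fun x => ∂ₓ∂ₓS.φ (0, x)]

lemma isBigO_w_sub_σ_zero : (fun q => S.w q - S.σ 0) =O[𝓟 (strip S.T)] S.envelope := by
  have h := isBigO_comp_add_sub_comp (g := fun _ => 0) (contDiff_infty.1 S.contDiff_σ 1)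
    (Asymptotics.isBigO_const_const _ one_ne_zero _) S.bounded_ux
  simp only [zero_add] at h
  exact h.trans S.isBigO_ux

lemma ux_mul_w_sub_nonneg (q : ℝ × ℝ) : 0 ≤ ∂ₓS.u q * (S.w q - S.σ 0) := by
  have h := mul_sq_le_mul_sub_of_le_deriv (a := 0) (v := ∂ₓS.u q) (m := 0)
    (F := S.σ) (by fun_prop) fun s _ => (S.deriv_σ_pos _).le
  simpa only [zero_mul, zero_add, w] using h

lemma timeDeriv_entropy_add_spaceDeriv_flux {η ξ : ℝ → ℝ} (hη : ContDiff ℝ 2 η)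
    (hη₀ : ∀ v ∈ Icc P.um P.up, deriv η v = 0) (hξ : Differentiable ℝ ξ)
    (hξ' : deriv ξ = fun v => deriv η v * deriv P.f v) (hq : q ∈ strip S.T) :
    ∂ₜ(fun q => η (S.u q)) q
        + ∂ₓ(fun q => ξ (S.u q) - ξ (S.U q) - deriv η (S.u q) * (S.w q - S.σ 0)) q
      = -(deriv (deriv η) (S.u q) * (∂ₓS.u q * (S.w q - S.σ 0))) := by
  have hηd : Differentiable ℝ η := hη.differentiable two_ne_zero
  have hη'd : Differentiable ℝ (deriv η) := hη.differentiable_deriv_two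
  rw [timeDeriv_comp hηd (by fun_prop), spaceDeriv_sub (by fun_prop) (by fun_prop),
    spaceDeriv_sub (by fun_prop) (by fun_prop), spaceDeriv_mul (by fun_prop) (by fun_prop),
    spaceDeriv_comp hξ (by fun_prop), spaceDeriv_comp hξ (by fun_prop),
    spaceDeriv_comp hη'd (by fun_prop), spaceDeriv_sub (by fun_prop) (by fun_prop), hξ']
  have hconst : ∂ₓ(fun _ => S.σ 0) q = 0 := by simp [spaceDeriv]
  simp only [hconst, timeDeriv_u hq, hη₀ _ (S.U_mem_Icc q hq)]
  ring

lemma isBigO_comp_u_sub_sq {F : ℝ → ℝ} (hF : ContDiff ℝ 2 F)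
    (hF' : ∀ v ∈ Icc P.um P.up, deriv F v = 0) :
    (fun q => F (S.u q) - F (S.U q)) =O[𝓟 (strip S.T)] fun q => S.envelope q ^ 2 :=
  ((isBigO_taylor hF S.bounded_U S.bounded_φ).trans (S.isBigO_φ.pow 2)).congr'
    (eventually_principal.2 fun q hq => by simp [hF' _ (S.U_mem_Icc q hq), u]) .rfl

lemma isBigO_comp_u_sq {η : ℝ → ℝ} (hη : ContDiff ℝ 2 η)
    (hη₀ : ∀ v ∈ Icc P.um P.up, η v = 0 ∧ deriv η v = 0) :
    (fun q => η (S.u q)) =O[𝓟 (strip S.T)] fun q => S.envelope q ^ 2 :=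
  (isBigO_comp_u_sub_sq hη fun v hv => (hη₀ v hv).2).congr'
    (eventually_principal.2 fun q hq => by simp [(hη₀ _ (S.U_mem_Icc q hq)).1]) .rfl

lemma integral_entropy_le {η : ℝ → ℝ} (hη : ContDiff ℝ 2 η)
    (hη₀ : ∀ v ∈ Icc P.um P.up, η v = 0 ∧ deriv η v = 0) (hη'' : ∀ v, 0 ≤ deriv (deriv η) v)
    (ht : t ∈ Icc 0 S.T) : ∫ x, η (S.u (t, x)) ≤ ∫ x, η (S.u (0, x)) := by
  have hη' : ContDiff ℝ 1 (deriv η) := hη.deriv'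
  obtain ⟨ξ, hξ, hξ'⟩ := exists_contDiff_primitive (n := 1)
    (hη'.mul (contDiff_infty.1 (contDiff_deriv_infty P.contDiff_f) 1))
  replace hξ : ContDiff ℝ 2 ξ := by norm_num at hξ; exact hξ
  have hξO := isBigO_comp_u_sub_sq (S := S) hξ fun v hv => by simp [hξ', (hη₀ v hv).2]
  have hη'O : (fun q => deriv η (S.u q)) =O[𝓟 (strip S.T)] S.envelope :=
    ((S.isBigO_comp_u_sub hη').trans S.isBigO_φ).congr'
      (eventually_principal.2 fun q hq => by simp [(hη₀ _ (S.U_mem_Icc q hq)).2]) .rfl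
  have hu := contDiff_infty.1 S.contDiff_u 1
  have hU := contDiff_infty.1 S.contDiff_U 1
  have hw := contDiff_infty.1 S.contDiff_w 1
  have hbalance := integral_le_integral_add_setIntegral_slab S.isUniformlyL2_envelope
    (H := fun _ => 0) ((hη.of_le one_le_two).comp hu)
    ((((hξ.of_le one_le_two).comp hu).sub ((hξ.of_le one_le_two).comp hU)).sub
      ((hη'.comp hu).mul (hw.sub contDiff_const))) (isBigO_comp_u_sq hη hη₀)
    (hξO.sub (isBigO_mul_sq hη'O isBigO_w_sub_σ_zero))
    (fun q hq => timeDeriv_entropy_add_spaceDeriv_flux hη (fun v hv => (hη₀ v hv).2)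
      (hξ.differentiable two_ne_zero) hξ' hq)
    (isBigO_bounded_mul (S.bounded_comp_u hη'.continuous_deriv_one)
      (isBigO_mul_sq S.isBigO_ux isBigO_w_sub_σ_zero)).neg_left ht integrableOn_zero
    fun q _ => neg_nonpos.2 (mul_nonneg (hη'' _) (ux_mul_w_sub_nonneg q))
  simpa using hbalance

lemma entropy_comp_u_eq_zero {η : ℝ → ℝ} (hη : ContDiff ℝ 2 η) (hη_nonneg : ∀ v, 0 ≤ η v)
    (hη₀ : ∀ v ∈ Icc P.um P.up, η v = 0 ∧ deriv η v = 0) (hη'' : ∀ v, 0 ≤ deriv (deriv η) v)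
    (hinit : ∀ x, η (S.u (0, x)) = 0) (hq : q ∈ strip S.T) : η (S.u q) = 0 := by
  have hcont : Continuous fun q => η (S.u q) := hη.continuous.comp S.contDiff_u.continuous
  have hle := integral_entropy_le hη hη₀ hη'' hq.1
  simp only [hinit, integral_zero] at hle
  have hzero : (fun x => η (S.u (q.1, x))) =ᵐ[volume] 0 :=
    (integral_eq_zero_iff_of_nonneg (fun _ => hη_nonneg _)
      (integrable_slice S.isUniformlyL2_envelope hcont (isBigO_comp_u_sq hη hη₀) hq.1)).1
      (hle.antisymm (integral_nonneg fun _ => hη_nonneg _))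
  exact congrFun ((hcont.comp (Continuous.prodMk_right q.1)).ae_eq_iff_eq volume continuous_zero
    |>.1 hzero) q.2

lemma abs_u_le (hq : q ∈ strip S.T) : |S.u q| ≤ P.R := by
  have hT : 0 ≤ S.T := hq.1.1.trans hq.1.2
  have hR : |P.um| + |P.up| ≤ P.R :=
    le_add_of_nonneg_right ((abs_nonneg _).trans (abs_φ_zero_le hT 0))
  suffices h : ∀ ε : ℝ, |ε| = 1 → ε * S.u q ≤ P.R from
    abs_le.2 ⟨by linarith [h (-1) (by simp)], by linarith [h 1 (by simp)]⟩
  intro ε hε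
  have hle (v : ℝ) : ε * v ≤ |v| := (le_abs_self _).trans_eq (by rw [abs_mul, hε, one_mul])
  have hwave (v : ℝ) (hv : v ∈ Icc P.um P.up) : |v| ≤ |P.um| + |P.up| :=
    (abs_le_max_abs_abs hv.1 hv.2).trans (max_le_add_of_nonneg (abs_nonneg _) (abs_nonneg _))
  have hinit (x : ℝ) : |S.u (0, x)| ≤ P.R := (abs_add_le _ _).trans
    (add_le_add (hwave _ (S.U_mem_Icc _ (mk_mem_strip.2 ⟨le_rfl, hT⟩))) (abs_φ_zero_le hT x))
  have hzero (v : ℝ) (hv : |v| ≤ P.R) : max (ε * v - P.R) 0 = 0 :=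
    max_eq_right (by linarith [hle v])
  have hpow := entropy_comp_u_eq_zero ((contDiff_max_zero_pow 2).comp (by fun_prop))
    (η := fun v => max (ε * v - P.R) 0 ^ 3) (fun v => pow_nonneg (le_max_right _ _) 3)
    (fun v hv => by
      simp [(hasDerivAt_max_affine_pow ε P.R 1 v).deriv, hzero v (by linarith [hwave v hv])])
    (fun v => ?_) (fun x => by simp [hzero _ (hinit x)]) hq
  · linarith [le_max_left (ε * S.u q - P.R) 0, (pow_eq_zero_iff three_ne_zero).1 hpow]
  · rw [funext fun v => (hasDerivAt_max_affine_pow ε P.R 1 v).deriv]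
    have hpos := mul_nonneg (sq_nonneg ε) (le_max_right (ε * v - P.R) 0)
    refine le_of_le_of_eq ?_
      ((hasDerivAt_max_affine_pow ε P.R 0 v).const_mul (ε * (1 + 2 : ℕ))).deriv.symm
    push_cast
    linear_combination 6 * hpos

end MaximumPrinciple

section Coefficients

variable {P : RarefactionData} (S : PerturbedRarefaction P) {t s : ℝ} {q : ℝ × ℝ}

/-- The degenerate weight `(1 + (∂ₓφ) ^ 2) ^ ((p - 1) / 2)` of the dissipation. -/
noncomputable def ρ (q : ℝ × ℝ) : ℝ := weight P.p (∂ₓS.φ q)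

@[fun_prop]
lemma contDiff_ρ : ContDiff ℝ ∞ S.ρ := (contDiff_weight P.p).comp (by fun_prop)

lemma ρ_pos (q : ℝ × ℝ) : 0 < S.ρ q := weight_pos _ _

lemma ρ_le_one (q : ℝ × ℝ) : S.ρ q ≤ 1 := weight_le_one P.p_le_one _

lemma bounded_ρ : S.ρ =O[𝓟 (strip S.T)] fun _ => (1 : ℝ) :=
  isBigO_one_principal_iff.2 ⟨1, fun q _ => by
    rw [abs_of_pos (S.ρ_pos q)]
    exact S.ρ_le_one q⟩

lemma c₂_pos {P : RarefactionData} (S : PerturbedRarefaction P) : 0 < P.c₂ :=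
  pos_of_mul_pos_left ((S.deriv_σ_pos 0).trans_le (S.deriv_σ_bounds 0).2) (weight_pos _ _).le

lemma deriv_σ_le (v : ℝ) : deriv S.σ v ≤ P.c₂ :=
  (S.deriv_σ_bounds v).2.trans (mul_le_of_le_one_right S.c₂_pos.le (weight_le_one P.p_le_one v))

variable {S}

lemma α_mul_ρ_le_deriv_σ (hq : q ∈ strip S.T) (hs : |s| ≤ |∂ₓS.φ q|) :
    P.α * S.ρ q ≤ deriv S.σ (∂ₓS.U q + s) := by
  have hweight := weight_le_mul_weight_add P.p_le_one (abs_Ux_le hq) hs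
  rw [RarefactionData.α, div_mul_eq_mul_div, div_le_iff₀ P.κ_pos]
  calc P.c₁ * S.ρ q ≤ P.c₁ * (P.κ * weight P.p (∂ₓS.U q + s)) :=
        mul_le_mul_of_nonneg_left hweight P.c₁_pos.le
    _ = P.c₁ * weight P.p (∂ₓS.U q + s) * P.κ := by ring
    _ ≤ deriv S.σ (∂ₓS.U q + s) * P.κ :=
        mul_le_mul_of_nonneg_right (S.deriv_σ_bounds _).1 P.κ_pos.le

lemma α_mul_ρ_le_deriv_σ_ux (hq : q ∈ strip S.T) : P.α * S.ρ q ≤ deriv S.σ (∂ₓS.u q) := by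
  rw [spaceDeriv_u]
  exact α_mul_ρ_le_deriv_σ hq le_rfl

lemma deriv_σ_ux_le_β_mul_ρ (hq : q ∈ strip S.T) : deriv S.σ (∂ₓS.u q) ≤ P.β * S.ρ q := by
  have hweight := weight_le_mul_weight_add (a := -∂ₓS.U q) (b := ∂ₓS.u q) P.p_le_one
    ((abs_neg _).trans_le (abs_Ux_le hq)) le_rfl
  have hφx : -∂ₓS.U q + ∂ₓS.u q = ∂ₓS.φ q := by rw [spaceDeriv_u]; ring
  rw [hφx] at hweight
  calc deriv S.σ (∂ₓS.u q) ≤ P.c₂ * weight P.p (∂ₓS.u q) := (S.deriv_σ_bounds _).2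
    _ ≤ P.c₂ * (P.κ * S.ρ q) := mul_le_mul_of_nonneg_left hweight S.c₂_pos.le
    _ = P.β * S.ρ q := (mul_assoc _ _ _).symm

lemma abs_U_le (hq : q ∈ strip S.T) : |S.U q| ≤ P.R := by
  have hM := (abs_nonneg _).trans (abs_φ_zero_le (S := S) (hq.1.1.trans hq.1.2) 0)
  have hU := abs_le_max_abs_abs (S.U_mem_Icc q hq).1 (S.U_mem_Icc q hq).2
  exact hU.trans ((max_le_add_of_nonneg (abs_nonneg _) (abs_nonneg _)).trans
    (le_add_of_nonneg_right hM))

lemma abs_φ_le (hq : q ∈ strip S.T) : |S.φ q| ≤ 2 * P.R := by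
  have hφ : S.φ q = S.u q - S.U q := by simp [u]
  rw [hφ, two_mul]
  exact (abs_sub _ _).trans (add_le_add (abs_u_le hq) (abs_U_le hq))

lemma abs_deriv_f_u_sub_le (hq : q ∈ strip S.T) :
    |deriv P.f (S.u q) - deriv P.f (S.U q)| ≤ P.L * |S.φ q| := by
  simpa [u] using RarefactionData.abs_deriv_f_sub_le (abs_U_le hq) (abs_u_le hq)

end Coefficients

section WaveDecay

variable {P : RarefactionData} {S : PerturbedRarefaction P} {t : ℝ} {g c : ℝ × ℝ → ℝ}

lemma isBigO_bounded_mul_sq (hc : c =O[𝓟 (strip S.T)] fun _ => (1 : ℝ))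
    (hg : g =O[𝓟 (strip S.T)] S.envelope) :
    (fun q => c q * g q ^ 2) =O[𝓟 (strip S.T)] fun q => S.envelope q ^ 2 :=
  isBigO_bounded_mul hc (hg.pow 2)

lemma integrableOn_slab_mul_sq (hcc : Continuous c) (hgc : Continuous g)
    (hc : c =O[𝓟 (strip S.T)] fun _ => (1 : ℝ)) (hg : g =O[𝓟 (strip S.T)] S.envelope)
    (ht : t ∈ Icc 0 S.T) : IntegrableOn (fun q => c q * g q ^ 2) (slab t) :=
  integrableOn_slab S.isUniformlyL2_envelope (by fun_prop) (isBigO_bounded_mul_sq hc hg) ht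

lemma integrableOn_slab_sq_of_isBigO (hgc : Continuous g) (hg : g =O[𝓟 (strip S.T)] S.envelope)
    (ht : t ∈ Icc 0 S.T) : IntegrableOn (fun q => g q ^ 2) (slab t) :=
  integrableOn_slab S.isUniformlyL2_envelope (by fun_prop) (hg.pow 2) ht

lemma setIntegral_slab_Uxx_sq_le (ht : t ∈ Icc 0 S.T) :
    ∫ q in slab t, ∂ₓ∂ₓS.U q ^ 2 ≤ P.CU ^ 2 := by
  refine (setIntegral_slab_le_of_forall_integral_le_rpow (r := -(9 : ℝ) / 4) ht.1
    (integrableOn_slab_sq_of_isBigO (by fun_prop) S.isBigO_Uxx ht) (by norm_num)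
    (sq_nonneg P.CU) fun s hs => ?_).trans (by nlinarith [sq_nonneg P.CU])
  refine (integral_Uxx_sq_le (S := S) ⟨hs.1, hs.2.trans ht.2⟩).trans_eq ?_
  rw [mul_pow, ← Real.rpow_natCast ((1 + s) ^ _), ← Real.rpow_mul (by linarith [hs.1])]
  norm_num

lemma setIntegral_slab_Uxt_sq_le (ht : t ∈ Icc 0 S.T) :
    ∫ q in slab t, ∂ₜ∂ₓS.U q ^ 2 ≤ P.CU ^ 2 := by
  refine (setIntegral_slab_le_of_forall_integral_le_rpow (r := -2) ht.1
    (integrableOn_slab_sq_of_isBigO (by fun_prop) S.isBigO_Uxt ht) (by norm_num)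
    (sq_nonneg P.CU) fun s hs => ?_).trans_eq (by norm_num)
  rw [← inv_one_add_sq_eq_rpow hs.1, ← mul_pow]
  exact integral_Uxt_sq_le ⟨hs.1, hs.2.trans ht.2⟩

lemma setIntegral_slab_sq_mul_Ux_sq_le {K : ℝ} (hgc : Continuous g)
    (hg : g =O[𝓟 (strip S.T)] S.envelope) (ht : t ∈ Icc 0 S.T)
    (hK : ∀ s ∈ Icc 0 t, ∫ x, g (s, x) ^ 2 ≤ K) :
    ∫ q in slab t, ∂ₓS.U q ^ 2 * g q ^ 2 ≤ P.CU ^ 2 * K := by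
  have hK0 : 0 ≤ K := (integral_nonneg fun _ => sq_nonneg _).trans (hK 0 (left_mem_Icc.2 ht.1))
  have hbdd : (fun q => ∂ₓS.U q ^ 2) =O[𝓟 (strip S.T)] fun _ => (1 : ℝ) := by
    simpa using S.bounded_Ux.pow 2
  refine (setIntegral_slab_le_of_forall_integral_le_rpow (r := -2) ht.1
    (integrableOn_slab_mul_sq (by fun_prop) hgc hbdd hg ht) (by norm_num)
    (mul_nonneg (sq_nonneg P.CU) hK0) fun s hs => ?_).trans_eq (by norm_num)
  have hs' : s ∈ Icc 0 S.T := ⟨hs.1, hs.2.trans ht.2⟩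
  have hpoint (x : ℝ) : ∂ₓS.U (s, x) ^ 2 ≤ (P.CU * (1 + s)⁻¹) ^ 2 :=
    pow_le_pow_left₀ (S.Ux_nonneg _ (mk_mem_strip.2 hs')) (S.Ux_le _ (mk_mem_strip.2 hs')) 2
  calc ∫ x, ∂ₓS.U (s, x) ^ 2 * g (s, x) ^ 2
    _ ≤ ∫ x, (P.CU * (1 + s)⁻¹) ^ 2 * g (s, x) ^ 2 :=
        integral_mono (integrable_slice S.isUniformlyL2_envelope (by fun_prop)
          (isBigO_bounded_mul_sq hbdd hg) hs')
          ((integrable_slice S.isUniformlyL2_envelope (by fun_prop) (hg.pow 2) hs').const_mul _)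
          fun x => mul_le_mul_of_nonneg_right (hpoint x) (sq_nonneg _)
    _ = (P.CU * (1 + s)⁻¹) ^ 2 * ∫ x, g (s, x) ^ 2 := MeasureTheory.integral_const_mul _ _
    _ ≤ (P.CU * (1 + s)⁻¹) ^ 2 * K := mul_le_mul_of_nonneg_left (hK s hs) (sq_nonneg _)
    _ = P.CU ^ 2 * K * (1 + s) ^ (-2 : ℝ) := by
        rw [← inv_one_add_sq_eq_rpow hs.1]; ring

end WaveDecay

/-! ### Energy estimates -/

section BasicEnergy

variable {P : RarefactionData} {S : PerturbedRarefaction P} {t : ℝ} {q : ℝ × ℝ}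

lemma timeDeriv_sq_φ_add_spaceDeriv_flux {Φ : ℝ → ℝ} (hΦ : Differentiable ℝ Φ)
    (hΦ' : deriv Φ = P.f) (hq : q ∈ strip S.T) :
    ∂ₜ(fun q => S.φ q ^ 2 / 2) q
        + ∂ₓ(fun q => S.φ q * P.f (S.u q) - (Φ (S.u q) - Φ (S.U q))
          - S.φ q * (S.w q - S.σ (∂ₓS.U q))) q
      = S.φ q * (deriv S.σ (∂ₓS.U q) * ∂ₓ∂ₓS.U q) - ∂ₓS.φ q * (S.w q - S.σ (∂ₓS.U q))
        - ∂ₓS.U q * (P.f (S.u q) - P.f (S.U q) - deriv P.f (S.U q) * S.φ q) := by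
  rw [timeDeriv_sq_div_two (by fun_prop), spaceDeriv_sub (by fun_prop) (by fun_prop),
    spaceDeriv_sub (by fun_prop) (by fun_prop), spaceDeriv_mul (by fun_prop) (by fun_prop),
    spaceDeriv_mul (by fun_prop) (by fun_prop), spaceDeriv_sub (by fun_prop) (by fun_prop),
    spaceDeriv_sub (by fun_prop) (by fun_prop), spaceDeriv_comp hΦ (by fun_prop),
    spaceDeriv_comp hΦ (by fun_prop), spaceDeriv_comp (by fun_prop) (by fun_prop),
    spaceDeriv_comp (by fun_prop) (by fun_prop), hΦ', spaceDeriv_u]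
  simp only [timeDeriv_φ hq]
  ring

lemma basic_dissipation_le (hq : q ∈ strip S.T) :
    S.φ q * (deriv S.σ (∂ₓS.U q) * ∂ₓ∂ₓS.U q) - ∂ₓS.φ q * (S.w q - S.σ (∂ₓS.U q))
        - ∂ₓS.U q * (P.f (S.u q) - P.f (S.U q) - deriv P.f (S.U q) * S.φ q)
      ≤ S.φ q * (deriv S.σ (∂ₓS.U q) * ∂ₓ∂ₓS.U q) - P.α * (S.ρ q * ∂ₓS.φ q ^ 2) := by
  have hconv := deriv_mul_sub_le_sub_of_convexOn (differentiable_of_contDiff_infty P.contDiff_f)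
    P.convexOn_f (S.U q) (S.u q)
  have hσ := mul_sq_le_mul_sub_of_le_deriv (differentiable_of_contDiff_infty S.contDiff_σ)
    fun s => α_mul_ρ_le_deriv_σ (s := s) hq
  have hφ : S.u q - S.U q = S.φ q := by simp [u]
  have hw : S.σ (∂ₓS.U q + ∂ₓS.φ q) = S.w q := by rw [w, spaceDeriv_u]
  rw [hφ] at hconv
  rw [hw] at hσ
  nlinarith [mul_nonneg (S.Ux_nonneg q hq) (sub_nonneg.2 hconv)]

lemma isBigO_basic_flux {Φ : ℝ → ℝ} (hΦ : ContDiff ℝ 2 Φ) (hΦ' : deriv Φ = P.f) :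
    (fun q => S.φ q * P.f (S.u q) - (Φ (S.u q) - Φ (S.U q)) - S.φ q * (S.w q - S.σ (∂ₓS.U q)))
      =O[𝓟 (strip S.T)] fun q => S.envelope q ^ 2 := by
  have hf := (S.isBigO_comp_u_sub (contDiff_infty.1 P.contDiff_f 1)).trans S.isBigO_φ
  have hΦO := (isBigO_taylor hΦ S.bounded_U S.bounded_φ).trans (S.isBigO_φ.pow 2)
  have hw := S.isBigO_w_sub.trans S.isBigO_φx
  refine (((isBigO_mul_sq S.isBigO_φ hf).sub hΦO).sub (isBigO_mul_sq S.isBigO_φ hw)).congr_left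
    fun q => ?_
  simp only [hΦ', u]
  ring

lemma isBigO_basic_dissipation :
    (fun q => S.φ q * (deriv S.σ (∂ₓS.U q) * ∂ₓ∂ₓS.U q) - ∂ₓS.φ q * (S.w q - S.σ (∂ₓS.U q))
      - ∂ₓS.U q * (P.f (S.u q) - P.f (S.U q) - deriv P.f (S.U q) * S.φ q))
      =O[𝓟 (strip S.T)] fun q => S.envelope q ^ 2 :=
  ((isBigO_mul_sq S.isBigO_φ (isBigO_bounded_mul (isBigO_one_comp S.bounded_Ux (by fun_prop))
    S.isBigO_Uxx)).sub (isBigO_mul_sq S.isBigO_φx (S.isBigO_w_sub.trans S.isBigO_φx))).sub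
    (isBigO_bounded_mul S.bounded_Ux ((isBigO_taylor (contDiff_infty.1 P.contDiff_f 2) S.bounded_U
      S.bounded_φ).trans (S.isBigO_φ.pow 2)))

lemma integrableOn_slab_source (ht : t ∈ Icc 0 S.T) :
    IntegrableOn (fun q => S.φ q * (deriv S.σ (∂ₓS.U q) * ∂ₓ∂ₓS.U q)) (slab t) :=
  integrableOn_slab S.isUniformlyL2_envelope (by fun_prop) (isBigO_mul_sq S.isBigO_φ
    (isBigO_bounded_mul (isBigO_one_comp S.bounded_Ux (by fun_prop)) S.isBigO_Uxx)) ht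

lemma integral_φ_sq_div_two_add_le (ht : t ∈ Icc 0 S.T) :
    (∫ x, S.φ (t, x) ^ 2 / 2) + P.α * ∫ q in slab t, S.ρ q * ∂ₓS.φ q ^ 2
      ≤ (∫ x, S.φ (0, x) ^ 2 / 2)
        + ∫ q in slab t, S.φ q * (deriv S.σ (∂ₓS.U q) * ∂ₓ∂ₓS.U q) := by
  obtain ⟨Φ, hΦ, hΦ'⟩ := exists_contDiff_primitive (contDiff_infty.1 P.contDiff_f 1)
  replace hΦ : ContDiff ℝ 2 Φ := by norm_num at hΦ; exact hΦ
  have hΦ1 := hΦ.of_le one_le_two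
  have hf := contDiff_infty.1 P.contDiff_f 1
  have hu := contDiff_infty.1 S.contDiff_u 1
  have hU := contDiff_infty.1 S.contDiff_U 1
  have hφ := contDiff_infty.1 S.contDiff_φ 1
  have hw := contDiff_infty.1 S.contDiff_w 1
  have hσU : ContDiff ℝ 1 fun q => S.σ (∂ₓS.U q) := contDiff_infty.1 (by fun_prop) 1
  have hdiss := (integrableOn_slab_mul_sq (by fun_prop) (by fun_prop) S.bounded_ρ S.isBigO_φx
    ht).const_mul P.α
  have hbalance := integral_le_integral_add_setIntegral_slab S.isUniformlyL2_envelope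
    (F := fun q => S.φ q ^ 2 / 2) ((hφ.pow 2).div_const 2)
    (((hφ.mul (hf.comp hu)).sub ((hΦ1.comp hu).sub (hΦ1.comp hU))).sub (hφ.mul (hw.sub hσU)))
    (((S.isBigO_φ.pow 2).const_mul_left 2⁻¹).congr_left fun q => by ring)
    (isBigO_basic_flux hΦ hΦ')
    (fun q hq => timeDeriv_sq_φ_add_spaceDeriv_flux (hΦ.differentiable two_ne_zero) hΦ' hq)
    isBigO_basic_dissipation ht ((integrableOn_slab_source ht).sub hdiss)
    fun q hq => basic_dissipation_le hq
  simp only [Pi.sub_apply] at hbalance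
  rw [MeasureTheory.integral_sub (integrableOn_slab_source ht) hdiss,
    MeasureTheory.integral_const_mul] at hbalance
  linarith

lemma source_le {k : ℝ} (hk : 0 < k) (q : ℝ × ℝ) :
    S.φ q * (deriv S.σ (∂ₓS.U q) * ∂ₓ∂ₓS.U q)
      ≤ k / 32 * S.φ q ^ 2 + 8 * P.c₂ ^ 2 / k * ∂ₓ∂ₓS.U q ^ 2 := by
  set a := S.φ q
  set b := deriv S.σ (∂ₓS.U q) * ∂ₓ∂ₓS.U q
  have hb : b ^ 2 ≤ P.c₂ ^ 2 * ∂ₓ∂ₓS.U q ^ 2 := by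
    rw [mul_pow]
    exact mul_le_mul_of_nonneg_right
      (pow_le_pow_left₀ (S.deriv_σ_pos _).le (S.deriv_σ_le _) 2) (sq_nonneg _)
  have hyoung : k / 32 * a ^ 2 + 8 / k * b ^ 2 - a * b = k / 32 * (a - 16 / k * b) ^ 2 := by
    field_simp
    ring
  calc a * b ≤ k / 32 * a ^ 2 + 8 / k * b ^ 2 := by
        linarith [mul_nonneg (by positivity : 0 ≤ k / 32) (sq_nonneg (a - 16 / k * b))]
    _ ≤ k / 32 * a ^ 2 + 8 / k * (P.c₂ ^ 2 * ∂ₓ∂ₓS.U q ^ 2) := by gcongr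
    _ = k / 32 * a ^ 2 + 8 * P.c₂ ^ 2 / k * ∂ₓ∂ₓS.U q ^ 2 := by ring

lemma setIntegral_slab_source_le {K : ℝ} (ht : t ∈ Icc 0 S.T)
    (hK : ∀ s ∈ Icc 0 S.T, ∫ x, S.φ (s, x) ^ 2 ≤ K) :
    ∫ q in slab t, S.φ q * (deriv S.σ (∂ₓS.U q) * ∂ₓ∂ₓS.U q)
      ≤ K / 4 + 64 * P.c₂ ^ 2 * P.CU ^ 2 := by
  have hK0 : 0 ≤ K := (integral_nonneg fun _ => sq_nonneg _).trans (hK t ht)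
  refine (setIntegral_slab_le_of_forall_integral_le_rpow (r := -(9 : ℝ) / 8)
    (C := K / 32 + 8 * P.c₂ ^ 2 * P.CU ^ 2) ht.1 (integrableOn_slab_source ht) (by norm_num)
    (by positivity) fun s hs => ?_).trans_eq (by ring)
  have hs' : s ∈ Icc 0 S.T := ⟨hs.1, hs.2.trans ht.2⟩
  set k := (1 + s) ^ (-(9 : ℝ) / 8)
  have hk : 0 < k := Real.rpow_pos_of_pos (by linarith [hs.1]) _
  have hφ := (S.isUniformlyL2_φ_derivatives.1.integrable_sq s hs').const_mul (k / 32)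
  have hUxx := (integrable_Uxx_sq hs').const_mul (8 * P.c₂ ^ 2 / k)
  calc ∫ x, S.φ (s, x) * (deriv S.σ (∂ₓS.U (s, x)) * ∂ₓ∂ₓS.U (s, x))
    _ ≤ ∫ x, (k / 32 * S.φ (s, x) ^ 2 + 8 * P.c₂ ^ 2 / k * ∂ₓ∂ₓS.U (s, x) ^ 2) :=
        integral_mono (integrable_slice S.isUniformlyL2_envelope (by fun_prop)
          (isBigO_mul_sq S.isBigO_φ (isBigO_bounded_mul
            (isBigO_one_comp S.bounded_Ux (by fun_prop)) S.isBigO_Uxx)) hs')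
          (hφ.add hUxx) fun x => source_le hk (s, x)
    _ = k / 32 * (∫ x, S.φ (s, x) ^ 2) + 8 * P.c₂ ^ 2 / k * ∫ x, ∂ₓ∂ₓS.U (s, x) ^ 2 := by
        rw [MeasureTheory.integral_add hφ hUxx, MeasureTheory.integral_const_mul,
          MeasureTheory.integral_const_mul]
    _ ≤ k / 32 * K + 8 * P.c₂ ^ 2 / k * (P.CU * k) ^ 2 :=
        add_le_add (mul_le_mul_of_nonneg_left (hK s hs') (by positivity))
          (mul_le_mul_of_nonneg_left (integral_Uxx_sq_le hs') (by positivity))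
    _ = (K / 32 + 8 * P.c₂ ^ 2 * P.CU ^ 2) * k := by field_simp

end BasicEnergy

lemma exists_basic_energy_le (P : RarefactionData) :
    ∃ C, ∀ S : PerturbedRarefaction P, ∀ t ∈ Icc 0 S.T,
      ∫ x, S.φ (t, x) ^ 2 ≤ C ∧ ∫ q in slab t, S.ρ q * ∂ₓS.φ q ^ 2 ≤ C / P.α := by
  set A := P.M ^ 2 + 128 * P.c₂ ^ 2 * P.CU ^ 2
  refine ⟨2 * A, fun S => ?_⟩
  have hinit := (integral_initial_sq_le (S := S)).1
  have hdiss (t) (ht : t ∈ Icc 0 S.T) : 0 ≤ P.α * ∫ q in slab t, S.ρ q * ∂ₓS.φ q ^ 2 :=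
    mul_nonneg P.α_pos.le
      (setIntegral_slab_nonneg ht.2 fun q _ => mul_nonneg (S.ρ_pos q).le (sq_nonneg _))
  have henergy (K) (hK : ∀ s ∈ Icc 0 S.T, ∫ x, S.φ (s, x) ^ 2 ≤ K) (t) (ht : t ∈ Icc 0 S.T) :
      (∫ x, S.φ (t, x) ^ 2) + 2 * (P.α * ∫ q in slab t, S.ρ q * ∂ₓS.φ q ^ 2) ≤ A + K / 2 := by
    have hbalance := integral_φ_sq_div_two_add_le ht
    simp only [MeasureTheory.integral_div] at hbalance
    linarith [setIntegral_slab_source_le ht hK]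
  obtain ⟨B, hB⟩ := S.isUniformlyL2_φ_derivatives.1.exists_integral_sq_le
  have hφ := le_two_mul_of_le_add_half (A := A) ⟨B, forall_mem_image.2 hB⟩
    fun K hK t ht => by linarith [henergy K hK t ht, hdiss t ht]
  refine fun t ht => ⟨hφ t ht, (le_div_iff₀' P.α_pos).2 ?_⟩
  have hnonneg : 0 ≤ ∫ x, S.φ (t, x) ^ 2 := integral_nonneg fun _ => sq_nonneg _
  linarith [henergy _ hφ t ht, hφ t ht]

section SecondOrderDissipation

variable {P : RarefactionData} {S : PerturbedRarefaction P} {t Λ : ℝ} {q : ℝ × ℝ}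

lemma one_le_of_one_le_mul_ρ (hΛ : 1 ≤ Λ * S.ρ q) : 1 ≤ Λ := by
  have hΛ0 : 0 < Λ := pos_of_mul_pos_left (one_pos.trans_le hΛ) (S.ρ_pos q).le
  exact hΛ.trans (mul_le_of_le_one_right hΛ0.le (S.ρ_le_one q))

lemma neg_φxx_mul_φt_le (hq : q ∈ strip S.T) (hΛ : 1 ≤ Λ * S.ρ q) :
    -(∂ₓ∂ₓS.φ q * ∂ₜS.φ q) ≤ -(P.α / 4) * (S.ρ q * ∂ₓ∂ₓS.φ q ^ 2)
      + P.c₂ / 2 * ∂ₓ∂ₓS.U q ^ 2 + 2 * Λ ^ 2 / P.α * P.L ^ 2 * (S.ρ q * ∂ₓS.φ q ^ 2)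
      + 2 * Λ / P.α * P.L ^ 2 * (∂ₓS.U q ^ 2 * S.φ q ^ 2) := by
  have hcoeff : 0 ≤ 2 * Λ / P.α :=
    div_nonneg (by linarith [one_le_of_one_le_mul_ρ hΛ]) P.α_pos.le
  have hA : (deriv P.f (S.u q) * ∂ₓS.φ q) ^ 2 ≤ P.L ^ 2 * ∂ₓS.φ q ^ 2 := by
    rw [mul_pow]
    exact mul_le_mul_of_nonneg_right
      (sq_le_sq.2 ((RarefactionData.abs_deriv_f_le (abs_u_le hq)).trans (le_abs_self _)))
      (sq_nonneg _)
  have hB : ((deriv P.f (S.u q) - deriv P.f (S.U q)) * ∂ₓS.U q) ^ 2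
      ≤ P.L ^ 2 * (∂ₓS.U q ^ 2 * S.φ q ^ 2) := by
    calc ((deriv P.f (S.u q) - deriv P.f (S.U q)) * ∂ₓS.U q) ^ 2
      _ = |deriv P.f (S.u q) - deriv P.f (S.U q)| ^ 2 * ∂ₓS.U q ^ 2 := by rw [mul_pow, sq_abs]
      _ ≤ (P.L * |S.φ q|) ^ 2 * ∂ₓS.U q ^ 2 := by
        gcongr
        exact abs_deriv_f_u_sub_le hq
      _ = P.L ^ 2 * (∂ₓS.U q ^ 2 * S.φ q ^ 2) := by rw [mul_pow, sq_abs]; ring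
  have hweight : ∂ₓS.φ q ^ 2 ≤ Λ * (S.ρ q * ∂ₓS.φ q ^ 2) := by
    rw [← mul_assoc]
    exact le_mul_of_one_le_left (sq_nonneg _) hΛ
  have hmain := neg_mul_le_of_ellipticity (X := ∂ₓ∂ₓS.φ q) (Y := ∂ₓ∂ₓS.U q)
    (A := deriv P.f (S.u q) * ∂ₓS.φ q)
    (B := (deriv P.f (S.u q) - deriv P.f (S.U q)) * ∂ₓS.U q) P.α_pos (S.ρ_pos q) hΛ
    (α_mul_ρ_le_deriv_σ_ux hq) (S.deriv_σ_le _)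
  have hA' := mul_le_mul_of_nonneg_left
    (hA.trans (mul_le_mul_of_nonneg_left hweight (sq_nonneg P.L))) hcoeff
  have hB' := mul_le_mul_of_nonneg_left hB hcoeff
  rw [timeDeriv_φ hq, spaceDeriv_w]
  simp only [spaceDeriv_spaceDeriv_u]
  calc _ ≤ _ := hmain
    _ ≤ _ := add_le_add (add_le_add le_rfl hA') hB'
    _ = _ := by ring

lemma integrableOn_slab_ρ_mul_φx_sq (ht : t ∈ Icc 0 S.T) :
    IntegrableOn (fun q => S.ρ q * ∂ₓS.φ q ^ 2) (slab t) :=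
  integrableOn_slab_mul_sq (by fun_prop) (by fun_prop) S.bounded_ρ S.isBigO_φx ht

lemma integrableOn_slab_ρ_mul_φxx_sq (ht : t ∈ Icc 0 S.T) :
    IntegrableOn (fun q => S.ρ q * ∂ₓ∂ₓS.φ q ^ 2) (slab t) :=
  integrableOn_slab_mul_sq (by fun_prop) (by fun_prop) S.bounded_ρ S.isBigO_φxx ht

lemma integrableOn_slab_Ux_sq_mul_sq {g : ℝ × ℝ → ℝ} (hgc : Continuous g)
    (hg : g =O[𝓟 (strip S.T)] S.envelope) (ht : t ∈ Icc 0 S.T) :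
    IntegrableOn (fun q => ∂ₓS.U q ^ 2 * g q ^ 2) (slab t) :=
  integrableOn_slab_mul_sq (by fun_prop) hgc (by simpa using S.bounded_Ux.pow 2) hg ht

lemma second_order_dissipation_le (ht : t ∈ Icc 0 S.T) (hΛ : ∀ q ∈ strip S.T, 1 ≤ Λ * S.ρ q) :
    P.α / 4 * ∫ q in slab t, S.ρ q * ∂ₓ∂ₓS.φ q ^ 2
      ≤ P.M ^ 2 / 2 + P.c₂ / 2 * (∫ q in slab t, ∂ₓ∂ₓS.U q ^ 2)
        + 2 * Λ ^ 2 / P.α * P.L ^ 2 * (∫ q in slab t, S.ρ q * ∂ₓS.φ q ^ 2)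
        + 2 * Λ / P.α * P.L ^ 2 * ∫ q in slab t, ∂ₓS.U q ^ 2 * S.φ q ^ 2 := by
  have hdiss := (integrableOn_slab_ρ_mul_φxx_sq ht).const_mul (-(P.α / 4))
  have hUxx := (integrableOn_slab_sq_of_isBigO (by fun_prop) S.isBigO_Uxx ht).const_mul (P.c₂ / 2)
  have hφx := (integrableOn_slab_ρ_mul_φx_sq ht).const_mul (2 * Λ ^ 2 / P.α * P.L ^ 2)
  have hφ := (integrableOn_slab_Ux_sq_mul_sq S.contDiff_φ.continuous S.isBigO_φ ht).const_mul
    (2 * Λ / P.α * P.L ^ 2)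
  have henergy := integral_spaceDeriv_sq_div_two_le S.isUniformlyL2_envelope S.contDiff_φ
    S.isBigO_φx S.isBigO_φt S.isBigO_φxx ht (((hdiss.add hUxx).add hφx).add hφ)
    fun q hq => neg_φxx_mul_φt_le hq (hΛ q hq)
  rw [integral_add' ((hdiss.add hUxx).add hφx) hφ, integral_add' (hdiss.add hUxx) hφx,
    integral_add' hdiss hUxx] at henergy
  simp only [MeasureTheory.integral_const_mul, MeasureTheory.integral_div] at henergy
  have hnonneg : 0 ≤ ∫ x, ∂ₓS.φ (t, x) ^ 2 := integral_nonneg fun _ => sq_nonneg _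
  linarith [(integral_initial_sq_le (S := S)).2.1]

lemma isBigO_φx_sq : (fun q => ∂ₓS.φ q ^ 2) =O[𝓟 (strip S.T)] S.envelope := by
  simpa only [sq] using isBigO_bounded_mul S.bounded_φx S.isBigO_φx

lemma isBigO_ρ_mul_φx_pow_four :
    (fun q => S.ρ q * ∂ₓS.φ q ^ 4) =O[𝓟 (strip S.T)] fun q => S.envelope q ^ 2 :=
  (isBigO_bounded_mul_sq S.bounded_ρ isBigO_φx_sq).congr_left fun q => by ring

lemma setIntegral_slab_ρ_mul_φx_pow_four_le (ht : t ∈ Icc 0 S.T) :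
    ∫ q in slab t, S.ρ q * ∂ₓS.φ q ^ 4
      ≤ (4 - P.p) ^ 2 * (2 * P.R) ^ 2 * ∫ q in slab t, S.ρ q * ∂ₓ∂ₓS.φ q ^ 2 := by
  rw [← MeasureTheory.integral_const_mul]
  refine setIntegral_slab_le_of_forall_integral_le ht.1
    (integrableOn_slab S.isUniformlyL2_envelope (by fun_prop) isBigO_ρ_mul_φx_pow_four ht)
    ((integrableOn_slab_ρ_mul_φxx_sq ht).const_mul _) fun s hs => ?_
  have hs' : s ∈ Icc 0 S.T := ⟨hs.1, hs.2.trans ht.2⟩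
  rw [MeasureTheory.integral_const_mul]
  have hcubic : (fun q => S.φ q * (∂ₓS.φ q ^ 3 * S.ρ q)) =O[𝓟 (strip S.T)]
      fun q => S.envelope q ^ 2 :=
    (isBigO_bounded_mul S.bounded_ρ
      (isBigO_bounded_mul S.bounded_φx (isBigO_mul_sq S.isBigO_φ isBigO_φx_sq))).congr_left
      fun q => by ring
  exact integral_weight_mul_pow_four_le P.p_le_one
    (fun x => hasDerivAt_spaceDeriv (by fun_prop) s x)
    (fun x => hasDerivAt_spaceDeriv (by fun_prop) s x) (by fun_prop)
    (fun x => abs_φ_le (mk_mem_strip.2 hs'))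
    (integrable_slice S.isUniformlyL2_envelope (by fun_prop) hcubic hs')
    (integrable_slice S.isUniformlyL2_envelope (by fun_prop) isBigO_ρ_mul_φx_pow_four hs')
    (integrable_slice S.isUniformlyL2_envelope (by fun_prop)
      (isBigO_bounded_mul_sq S.bounded_ρ S.isBigO_φxx) hs')

end SecondOrderDissipation

lemma exists_second_order_dissipation_le (P : RarefactionData) :
    ∃ C, ∀ (S : PerturbedRarefaction P) (Λ : ℝ), (∀ q ∈ strip S.T, 1 ≤ Λ * S.ρ q) →
      ∀ t ∈ Icc 0 S.T, ∫ q in slab t, S.ρ q * ∂ₓ∂ₓS.φ q ^ 2 ≤ C * Λ ^ 2 := by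
  obtain ⟨K, hK⟩ := exists_basic_energy_le P
  refine ⟨4 / P.α * (P.M ^ 2 / 2 + P.c₂ / 2 * P.CU ^ 2
    + 2 / P.α * P.L ^ 2 * (K / P.α) + 2 / P.α * P.L ^ 2 * (P.CU ^ 2 * K)), fun S Λ hΛ t ht => ?_⟩
  have hα := P.α_pos
  have hΛ1 : 1 ≤ Λ := one_le_of_one_le_mul_ρ (hΛ (t, 0) (mk_mem_strip.2 ht))
  have hK0 : 0 ≤ K := (integral_nonneg fun _ => sq_nonneg _).trans (hK S t ht).1
  have hUxφ := setIntegral_slab_sq_mul_Ux_sq_le S.contDiff_φ.continuous S.isBigO_φ ht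
    fun s hs => (hK S s ⟨hs.1, hs.2.trans ht.2⟩).1
  calc ∫ q in slab t, S.ρ q * ∂ₓ∂ₓS.φ q ^ 2
    _ = 4 / P.α * (P.α / 4 * ∫ q in slab t, S.ρ q * ∂ₓ∂ₓS.φ q ^ 2) := by field_simp
    _ ≤ 4 / P.α * (P.M ^ 2 / 2 + P.c₂ / 2 * P.CU ^ 2 + 2 * Λ ^ 2 / P.α * P.L ^ 2 * (K / P.α)
          + 2 * Λ / P.α * P.L ^ 2 * (P.CU ^ 2 * K)) := by
        gcongr
        refine (second_order_dissipation_le ht hΛ).trans ?_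
        have hc₂ := S.c₂_pos
        gcongr
        exacts [setIntegral_slab_Uxx_sq_le ht, (hK S t ht).2]
    _ ≤ 4 / P.α * ((P.M ^ 2 / 2 + P.c₂ / 2 * P.CU ^ 2) * Λ ^ 2
          + 2 * Λ ^ 2 / P.α * P.L ^ 2 * (K / P.α)
          + 2 * Λ ^ 2 / P.α * P.L ^ 2 * (P.CU ^ 2 * K)) := by
        have hc₂ := S.c₂_pos
        gcongr
        exacts [le_mul_of_one_le_right (by positivity) (one_le_pow₀ hΛ1),
          le_self_pow₀ hΛ1 two_ne_zero]
    _ = _ := by ring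

section WeightedVelocityEnergy

variable {P : RarefactionData} {S : PerturbedRarefaction P} {t : ℝ} {q : ℝ × ℝ}

lemma ρ_mul_flux_sq_le (hq : q ∈ strip S.T) :
    S.ρ q * (deriv (deriv P.f) (S.u q) * ∂ₓS.u q ^ 2 + deriv P.f (S.u q) * ∂ₓ∂ₓS.u q) ^ 2
      ≤ 16 * P.L ^ 2 * (S.ρ q * ∂ₓS.φ q ^ 4 + ∂ₓS.U q ^ 2 * ∂ₓS.U q ^ 2)
        + 4 * P.L ^ 2 * (S.ρ q * ∂ₓ∂ₓS.φ q ^ 2 + ∂ₓ∂ₓS.U q ^ 2) := by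
  have hf' : deriv P.f (S.u q) ^ 2 ≤ P.L ^ 2 :=
    sq_le_sq.2 ((RarefactionData.abs_deriv_f_le (abs_u_le hq)).trans (le_abs_self _))
  have hf'' : deriv (deriv P.f) (S.u q) ^ 2 ≤ P.L ^ 2 :=
    sq_le_sq.2 ((RarefactionData.abs_deriv_deriv_f_le (abs_u_le hq)).trans (le_abs_self _))
  have hux : ∂ₓS.u q ^ 4 ≤ 8 * (∂ₓS.U q ^ 4 + ∂ₓS.φ q ^ 4) := by
    rw [spaceDeriv_u]
    exact (Even.add_pow_le (by decide)).trans_eq (by norm_num)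
  have huxx : ∂ₓ∂ₓS.u q ^ 2 ≤ 2 * (∂ₓ∂ₓS.U q ^ 2 + ∂ₓ∂ₓS.φ q ^ 2) := by
    rw [spaceDeriv_spaceDeriv_u]
    exact add_sq_le
  have hρ (a : ℝ) (ha : 0 ≤ a) : S.ρ q * a ≤ a := mul_le_of_le_one_left ha (S.ρ_le_one q)
  calc S.ρ q * (deriv (deriv P.f) (S.u q) * ∂ₓS.u q ^ 2 + deriv P.f (S.u q) * ∂ₓ∂ₓS.u q) ^ 2
    _ ≤ S.ρ q * (2 * ((deriv (deriv P.f) (S.u q) * ∂ₓS.u q ^ 2) ^ 2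
          + (deriv P.f (S.u q) * ∂ₓ∂ₓS.u q) ^ 2)) :=
        mul_le_mul_of_nonneg_left add_sq_le (S.ρ_pos q).le
    _ = S.ρ q * (2 * (deriv (deriv P.f) (S.u q) ^ 2 * ∂ₓS.u q ^ 4
          + deriv P.f (S.u q) ^ 2 * ∂ₓ∂ₓS.u q ^ 2)) := by ring
    _ ≤ S.ρ q * (2 * (P.L ^ 2 * (8 * (∂ₓS.U q ^ 4 + ∂ₓS.φ q ^ 4))
          + P.L ^ 2 * (2 * (∂ₓ∂ₓS.U q ^ 2 + ∂ₓ∂ₓS.φ q ^ 2)))) := by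
        have hρ0 := (S.ρ_pos q).le
        gcongr
    _ ≤ _ := by
        linarith [hρ (16 * P.L ^ 2 * ∂ₓS.U q ^ 4) (by positivity),
          hρ (4 * P.L ^ 2 * ∂ₓ∂ₓS.U q ^ 2) (by positivity)]

lemma neg_wxx_mul_wt_le (hq : q ∈ strip S.T) :
    -(∂ₓ∂ₓS.w q * ∂ₜS.w q) ≤ -(P.α / 4) * (S.ρ q * ∂ₜ∂ₓS.φ q ^ 2) + P.α / 2 * ∂ₜ∂ₓS.U q ^ 2
      + P.β / 2 * (16 * P.L ^ 2 * (S.ρ q * ∂ₓS.φ q ^ 4 + ∂ₓS.U q ^ 2 * ∂ₓS.U q ^ 2)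
        + 4 * P.L ^ 2 * (S.ρ q * ∂ₓ∂ₓS.φ q ^ 2 + ∂ₓ∂ₓS.U q ^ 2)) := by
  have hβ : 0 ≤ P.β := mul_nonneg S.c₂_pos.le P.κ_pos.le
  rw [spaceDeriv_spaceDeriv_w hq, timeDeriv_w, timeDeriv_spaceDeriv_u]
  refine (neg_mul_le_of_two_sided_ellipticity P.α_pos (S.ρ_pos q) (S.ρ_le_one q)
    (α_mul_ρ_le_deriv_σ_ux hq) (deriv_σ_ux_le_β_mul_ρ hq)).trans ?_
  gcongr
  exact ρ_mul_flux_sq_le hq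

lemma integral_wx_sq_div_two_add_le (ht : t ∈ Icc 0 S.T) :
    (∫ x, ∂ₓS.w (t, x) ^ 2 / 2) + P.α / 4 * ∫ q in slab t, S.ρ q * ∂ₜ∂ₓS.φ q ^ 2
      ≤ (∫ x, ∂ₓS.w (0, x) ^ 2 / 2) + P.α / 2 * (∫ q in slab t, ∂ₜ∂ₓS.U q ^ 2)
        + P.β / 2 * (16 * P.L ^ 2 * ((∫ q in slab t, S.ρ q * ∂ₓS.φ q ^ 4)
          + ∫ q in slab t, ∂ₓS.U q ^ 2 * ∂ₓS.U q ^ 2)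
        + 4 * P.L ^ 2 * ((∫ q in slab t, S.ρ q * ∂ₓ∂ₓS.φ q ^ 2)
          + ∫ q in slab t, ∂ₓ∂ₓS.U q ^ 2)) := by
  have hφxt := (integrableOn_slab_mul_sq (by fun_prop) (by fun_prop) S.bounded_ρ S.isBigO_φxt
    ht).const_mul (-(P.α / 4))
  have hUxt := (integrableOn_slab_sq_of_isBigO (by fun_prop) S.isBigO_Uxt ht).const_mul (P.α / 2)
  have hφx := integrableOn_slab S.isUniformlyL2_envelope (by fun_prop)
    (isBigO_ρ_mul_φx_pow_four (S := S)) ht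
  have hUx := integrableOn_slab_Ux_sq_mul_sq (by fun_prop) S.isBigO_Ux ht
  have hφxx := integrableOn_slab_ρ_mul_φxx_sq ht
  have hUxx := integrableOn_slab_sq_of_isBigO (by fun_prop) S.isBigO_Uxx ht
  have hfourth := (hφx.add hUx).const_mul (16 * P.L ^ 2)
  have hsecond := (hφxx.add hUxx).const_mul (4 * P.L ^ 2)
  have hflux := (hfourth.add hsecond).const_mul (P.β / 2)
  have henergy := integral_spaceDeriv_sq_div_two_le S.isUniformlyL2_envelope S.contDiff_w
    S.isBigO_wx S.isBigO_wt S.isBigO_wxx ht ((hφxt.add hUxt).add hflux)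
    fun q hq => neg_wxx_mul_wt_le hq
  rw [integral_add' (hφxt.add hUxt) hflux, integral_add' hφxt hUxt,
    MeasureTheory.integral_const_mul, MeasureTheory.integral_const_mul,
    MeasureTheory.integral_const_mul, integral_add' hfourth hsecond,
    MeasureTheory.integral_const_mul, MeasureTheory.integral_const_mul,
    integral_add' hφx hUx, integral_add' hφxx hUxx] at henergy
  linarith

lemma integral_wx_zero_sq_le (hT : 0 ≤ S.T) :
    ∫ x, ∂ₓS.w (0, x) ^ 2 ≤ 2 * P.c₂ ^ 2 * (P.CU ^ 2 + P.M ^ 2) := by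
  have h0 : (0 : ℝ) ∈ Icc 0 S.T := left_mem_Icc.2 hT
  have hUxx := integrable_Uxx_sq h0
  have hφxx := S.isUniformlyL2_φ_derivatives.2.2.1.integrable_sq 0 h0
  have hpoint (q : ℝ × ℝ) :
      ∂ₓS.w q ^ 2 ≤ 2 * P.c₂ ^ 2 * (∂ₓ∂ₓS.U q ^ 2 + ∂ₓ∂ₓS.φ q ^ 2) := by
    rw [spaceDeriv_w]
    simp only [spaceDeriv_spaceDeriv_u, mul_pow]
    calc deriv S.σ (∂ₓS.u q) ^ 2 * (∂ₓ∂ₓS.U q + ∂ₓ∂ₓS.φ q) ^ 2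
      _ ≤ P.c₂ ^ 2 * (2 * (∂ₓ∂ₓS.U q ^ 2 + ∂ₓ∂ₓS.φ q ^ 2)) := by
          gcongr
          exacts [(S.deriv_σ_pos _).le, S.deriv_σ_le _, add_sq_le]
      _ = _ := by ring
  calc ∫ x, ∂ₓS.w (0, x) ^ 2
    _ ≤ ∫ x, 2 * P.c₂ ^ 2 * (∂ₓ∂ₓS.U (0, x) ^ 2 + ∂ₓ∂ₓS.φ (0, x) ^ 2) :=
        integral_mono (integrable_slice S.isUniformlyL2_envelope (by fun_prop)
          (S.isBigO_wx.pow 2) h0) ((hUxx.add hφxx).const_mul _) fun x => hpoint (0, x)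
    _ = 2 * P.c₂ ^ 2 * ((∫ x, ∂ₓ∂ₓS.U (0, x) ^ 2) + ∫ x, ∂ₓ∂ₓS.φ (0, x) ^ 2) := by
        rw [MeasureTheory.integral_const_mul, MeasureTheory.integral_add hUxx hφxx]
    _ ≤ 2 * P.c₂ ^ 2 * (P.CU ^ 2 + P.M ^ 2) := by
        gcongr
        exacts [integral_Uxx_sq_le_CU_sq h0, integral_initial_sq_le.2.2]

lemma integral_ρ_mul_φxx_sq_le (ht : t ∈ Icc 0 S.T) :
    P.α ^ 2 * ∫ x, (S.ρ (t, x) * ∂ₓ∂ₓS.φ (t, x)) ^ 2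
      ≤ 2 * (∫ x, ∂ₓS.w (t, x) ^ 2) + 2 * P.α ^ 2 * P.CU ^ 2 := by
  have hρφxx := integrable_slice S.isUniformlyL2_envelope (by fun_prop)
    ((isBigO_bounded_mul S.bounded_ρ S.isBigO_φxx).pow 2) ht
  have hwx := integrable_slice S.isUniformlyL2_envelope (by fun_prop) (S.isBigO_wx.pow 2) ht
  have hUxx := (integrable_Uxx_sq ht).const_mul (2 * P.α ^ 2)
  have hpoint (q) (hq : q ∈ strip S.T) : P.α ^ 2 * (S.ρ q * ∂ₓ∂ₓS.φ q) ^ 2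
      ≤ 2 * ∂ₓS.w q ^ 2 + 2 * P.α ^ 2 * ∂ₓ∂ₓS.U q ^ 2 := by
    have hαρ : 0 ≤ P.α * S.ρ q := (mul_pos P.α_pos (S.ρ_pos q)).le
    have hφxx : ∂ₓ∂ₓS.φ q ^ 2 ≤ 2 * (∂ₓ∂ₓS.u q ^ 2 + ∂ₓ∂ₓS.U q ^ 2) := by
      rw [spaceDeriv_spaceDeriv_u]
      linarith [sq_nonneg (2 * ∂ₓ∂ₓS.U q + ∂ₓ∂ₓS.φ q)]
    have hw : (P.α * S.ρ q) ^ 2 * ∂ₓ∂ₓS.u q ^ 2 ≤ ∂ₓS.w q ^ 2 := by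
      rw [spaceDeriv_w, mul_pow (deriv S.σ _)]
      gcongr
      exact α_mul_ρ_le_deriv_σ_ux hq
    have hU : (P.α * S.ρ q) ^ 2 * ∂ₓ∂ₓS.U q ^ 2 ≤ P.α ^ 2 * ∂ₓ∂ₓS.U q ^ 2 := by
      gcongr
      exact mul_le_of_le_one_right P.α_pos.le (S.ρ_le_one q)
    linarith [mul_le_mul_of_nonneg_left hφxx (sq_nonneg (P.α * S.ρ q))]
  rw [← MeasureTheory.integral_const_mul, ← MeasureTheory.integral_const_mul]
  refine (integral_mono (hρφxx.const_mul _) ((hwx.const_mul 2).add hUxx) fun x =>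
    hpoint (t, x) (mk_mem_strip.2 ht)).trans ?_
  rw [integral_add' (hwx.const_mul 2) hUxx, MeasureTheory.integral_const_mul,
    MeasureTheory.integral_const_mul]
  exact add_le_add le_rfl
    (mul_le_mul_of_nonneg_left (integral_Uxx_sq_le_CU_sq ht) (by positivity))

end WeightedVelocityEnergy

lemma exists_weighted_velocity_energy_le (P : RarefactionData) :
    ∃ C, ∀ S : PerturbedRarefaction P, ∀ t ∈ Icc 0 S.T,
      (∫ x, ∂ₓS.w (t, x) ^ 2) + P.α / 2 * (∫ q in slab t, S.ρ q * ∂ₜ∂ₓS.φ q ^ 2)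
        ≤ C * (1 + ∫ q in slab t, S.ρ q * ∂ₓ∂ₓS.φ q ^ 2) := by
  set A := 2 * P.c₂ ^ 2 * (P.CU ^ 2 + P.M ^ 2) + P.α * P.CU ^ 2
    + P.β * (16 * P.L ^ 2 * (P.CU ^ 2 * P.CU ^ 2) + 4 * P.L ^ 2 * P.CU ^ 2)
  set B := P.β * (16 * P.L ^ 2 * ((4 - P.p) ^ 2 * (2 * P.R) ^ 2) + 4 * P.L ^ 2)
  refine ⟨max A B, fun S t ht => ?_⟩
  have hα := P.α_pos
  have hβ : 0 ≤ P.β := mul_nonneg S.c₂_pos.le P.κ_pos.le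
  set D := ∫ q in slab t, S.ρ q * ∂ₓ∂ₓS.φ q ^ 2
  have hD : 0 ≤ D :=
    setIntegral_slab_nonneg ht.2 fun q _ => mul_nonneg (S.ρ_pos q).le (sq_nonneg _)
  have hUx := setIntegral_slab_sq_mul_Ux_sq_le (by fun_prop) S.isBigO_Ux ht
    fun s hs => integral_Ux_sq_le ⟨hs.1, hs.2.trans ht.2⟩
  have henergy := integral_wx_sq_div_two_add_le ht
  simp only [MeasureTheory.integral_div] at henergy
  have hwt : P.α / 2 * (∫ q in slab t, ∂ₜ∂ₓS.U q ^ 2) ≤ P.α / 2 * P.CU ^ 2 := by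
    gcongr
    exact setIntegral_slab_Uxt_sq_le ht
  have hflux : P.β / 2 * (16 * P.L ^ 2 * ((∫ q in slab t, S.ρ q * ∂ₓS.φ q ^ 4)
        + ∫ q in slab t, ∂ₓS.U q ^ 2 * ∂ₓS.U q ^ 2) + 4 * P.L ^ 2 * (D + ∫ q in slab t,
          ∂ₓ∂ₓS.U q ^ 2)) ≤ P.β / 2 * (16 * P.L ^ 2 * ((4 - P.p) ^ 2 * (2 * P.R) ^ 2 * D
        + P.CU ^ 2 * P.CU ^ 2) + 4 * P.L ^ 2 * (D + P.CU ^ 2)) := by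
    gcongr
    exacts [setIntegral_slab_ρ_mul_φx_pow_four_le ht, setIntegral_slab_Uxx_sq_le ht]
  calc _ ≤ A + B * D := by linarith [integral_wx_zero_sq_le (ht.1.trans ht.2)]
    _ ≤ max A B * (1 + D) := by
      rw [mul_one_add]
      gcongr
      exacts [le_max_left _ _, le_max_right _ _]

/-- `Λ` stands for the power `N ^ (1 - p)` of the bound `N` of `(1 + (∂ₓφ) ^ 2) ^ (1 / 2)`. -/
lemma exists_second_derivative_energy_le (P : RarefactionData) :
    ∃ C, ∀ (S : PerturbedRarefaction P) (Λ : ℝ), (∀ q ∈ strip S.T, 1 ≤ Λ * S.ρ q) →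
      ∀ t ∈ Icc 0 S.T, (∫ x, (S.ρ (t, x) * ∂ₓ∂ₓS.φ (t, x)) ^ 2)
        + (∫ q in slab t, S.ρ q * ∂ₜ∂ₓS.φ q ^ 2) ≤ C * Λ ^ 2 := by
  obtain ⟨C₁, hC₁⟩ := exists_second_order_dissipation_le P
  obtain ⟨C₂, hC₂⟩ := exists_weighted_velocity_energy_le P
  set C := |C₂| * (1 + |C₁|)
  refine ⟨2 / P.α ^ 2 * C + 2 * P.CU ^ 2 + 2 / P.α * C, fun S Λ hΛ t ht => ?_⟩
  have hα := P.α_pos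
  have hΛ1 : 1 ≤ Λ ^ 2 := one_le_pow₀ (one_le_of_one_le_mul_ρ (hΛ (t, 0) (mk_mem_strip.2 ht)))
  have henergy : (∫ x, ∂ₓS.w (t, x) ^ 2) + P.α / 2 * (∫ q in slab t, S.ρ q * ∂ₜ∂ₓS.φ q ^ 2)
      ≤ C * Λ ^ 2 := by
    set D := ∫ q in slab t, S.ρ q * ∂ₓ∂ₓS.φ q ^ 2
    have hD : 0 ≤ D :=
      setIntegral_slab_nonneg ht.2 fun q _ => mul_nonneg (S.ρ_pos q).le (sq_nonneg _)
    calc _ ≤ C₂ * (1 + D) := hC₂ S t ht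
      _ ≤ |C₂| * (Λ ^ 2 + |C₁| * Λ ^ 2) := by
        gcongr
        exacts [le_abs_self C₂, (hC₁ S Λ hΛ t ht).trans (by gcongr; exact le_abs_self C₁)]
      _ = C * Λ ^ 2 := by ring
  have hw : 0 ≤ ∫ x, ∂ₓS.w (t, x) ^ 2 := integral_nonneg fun _ => sq_nonneg _
  have hdiss : 0 ≤ ∫ q in slab t, S.ρ q * ∂ₜ∂ₓS.φ q ^ 2 :=
    setIntegral_slab_nonneg ht.2 fun q _ => mul_nonneg (S.ρ_pos q).le (sq_nonneg _)
  have hφxt : ∫ q in slab t, S.ρ q * ∂ₜ∂ₓS.φ q ^ 2 ≤ 2 / P.α * (C * Λ ^ 2) := by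
    rw [div_mul_eq_mul_div, le_div_iff₀ hα]
    linarith
  have hφxx : ∫ x, (S.ρ (t, x) * ∂ₓ∂ₓS.φ (t, x)) ^ 2
      ≤ 2 / P.α ^ 2 * (C * Λ ^ 2) + 2 * P.CU ^ 2 := by
    rw [div_mul_eq_mul_div, div_add' _ _ _ (by positivity), le_div_iff₀ (by positivity)]
    linarith [integral_ρ_mul_φxx_sq_le ht, mul_nonneg hα.le hdiss]
  linarith [mul_le_mul_of_nonneg_left hΛ1 (sq_nonneg P.CU)]

end PerturbedRarefaction

open PerturbedRarefaction in
theorem second_derivative_energy_estimate_general (P : RarefactionData) :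
    ∃ C₀, 0 < C₀ ∧ ∀ (S : PerturbedRarefaction P) (N : ℝ),
      (∀ q ∈ strip S.T, (1 + ∂ₓS.φ q ^ 2) ^ ((1 : ℝ) / 2) ≤ N) → ∀ t ∈ Icc 0 S.T,
        (∫ x, (1 + ∂ₓS.φ (t, x) ^ 2) ^ (P.p - 1) * ∂ₓ∂ₓS.φ (t, x) ^ 2)
          + (∫ τ in (0 : ℝ)..t, ∫ x,
              (1 + ∂ₓS.φ (τ, x) ^ 2) ^ ((P.p - 1) / 2) * ∂ₜ∂ₓS.φ (τ, x) ^ 2)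
        ≤ C₀ * N ^ (2 * (1 - P.p)) := by
  obtain ⟨C, hC⟩ := exists_second_derivative_energy_le P
  refine ⟨|C| + 1, by positivity, fun S N hN t ht => ?_⟩
  have hN0 : 0 ≤ N := (Real.rpow_nonneg (by positivity) _).trans (hN (t, 0) (mk_mem_strip.2 ht))
  have henergy := hC S _ (fun q hq => one_le_rpow_mul_weight P.p_le_one (hN q hq)) t ht
  have hpower : (N ^ (1 - P.p)) ^ 2 = N ^ (2 * (1 - P.p)) := by
    rw [← Real.rpow_mul_natCast hN0, mul_comm, Nat.cast_ofNat]
  rw [hpower, setIntegral_slab_eq ht.1 (integrableOn_slab_mul_sq (by fun_prop) (by fun_prop)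
    S.bounded_ρ S.isBigO_φxt ht)] at henergy
  simp only [mul_pow, ρ, weight_sq] at henergy
  exact henergy.trans (mul_le_mul_of_nonneg_right ((le_abs_self C).trans (le_add_of_nonneg_right
    zero_le_one)) (Real.rpow_nonneg hN0 _))

/-- Proposition 6.1 (second-derivative energy estimate): with `N` any bound for the
weighted `L^∞` norm `sup (1+(∂ₓφ)²)^(1/2)` on `[0,T]×ℝ`, if
`‖φ(0)‖_{L²} + ‖∂ₓφ(0)‖_{L²} + ‖∂ₓ²φ(0)‖_{L²} + sup|φ(0)| ≤ M` then for all `t ∈ [0,T]`,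
`∫ (1+(∂ₓφ(t))²)^(p-1) (∂ₓ²φ(t))² + ∫₀^t ∫ (1+(∂ₓφ)²)^((p-1)/2) (∂ₜ∂ₓφ)² ≤ C₀ N^(3(1-p))`,
with `C₀` depending only on `p, c₁, c₂, CU, um, up, f, M`. -/
theorem second_derivative_energy_estimate
    (p c₁ c₂ : ℝ) (hp0 : 0 < p) (hp1 : p < 1) (hc1 : 0 < c₁) (hc12 : c₁ ≤ c₂)
    (f : ℝ → ℝ) (hf : ContDiff ℝ (⊤ : ℕ∞) f) (hconv : ∀ u : ℝ, 0 < deriv (deriv f) u)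
    (um up CU : ℝ) (hu : um < up) (hCU : 0 < CU)
    (M : ℝ) (hM : 0 < M) :
    ∃ C₀ : ℝ, 0 < C₀ ∧
      ∀ σ : ℝ → ℝ, ContDiff ℝ (⊤ : ℕ∞) σ → σ 0 = 0 →
      (∀ v : ℝ, c₁ * (1 + v ^ 2) ^ ((p - 1) / 2) ≤ deriv σ v ∧
        deriv σ v ≤ c₂ * (1 + v ^ 2) ^ ((p - 1) / 2)) →
      ∀ U : ℝ → ℝ → ℝ, ContDiff ℝ (⊤ : ℕ∞) (fun q : ℝ × ℝ => U q.1 q.2) →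
      (∀ t : ℝ, 0 ≤ t → ∀ x : ℝ,
        deriv (fun s => U s x) t + deriv (fun y => f (U t y)) x = 0) →
      (∀ t : ℝ, 0 ≤ t → ∀ x : ℝ, um < U t x ∧ U t x < up) →
      (∀ t : ℝ, 0 ≤ t → ∀ x : ℝ, 0 < deriv (U t) x) →
      (∀ t : ℝ, 0 ≤ t → ∀ x : ℝ, deriv (U t) x ≤ CU * (1 + t)⁻¹) →
      (∀ t : ℝ, 0 ≤ t → L2norm (deriv (U t)) ≤ CU * (1 + t) ^ (-(1 : ℝ) / 2)) →
      (∀ t : ℝ, 0 ≤ t → (∫ x : ℝ, |deriv (deriv (U t)) x|) ≤ CU * (1 + t)⁻¹) →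
      (∀ t : ℝ, 0 ≤ t → ∀ x : ℝ,
        L2norm (deriv (deriv (U t))) + |deriv (deriv (U t)) x|
          ≤ CU * (1 + t) ^ (-(9 : ℝ) / 8)) →
      (∀ t : ℝ, 0 ≤ t →
        L2norm (deriv (deriv (deriv (U t)))) ≤ CU * (1 + t) ^ (-(9 : ℝ) / 8)) →
      (∀ t : ℝ, 0 ≤ t → ∀ x : ℝ,
        L2norm (fun y => deriv (fun s => deriv (U s) y) t)
          + |deriv (fun s => deriv (U s) x) t| ≤ CU * (1 + t)⁻¹) →
      ∀ T : ℝ, 0 < T →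
      ∀ φ : ℝ → ℝ → ℝ, ContDiff ℝ (⊤ : ℕ∞) (fun q : ℝ × ℝ => φ q.1 q.2) →
      (∀ t ∈ Icc (0 : ℝ) T, ∀ x : ℝ,
        deriv (fun s => φ s x) t
          + deriv (fun y => f (U t y + φ t y) - f (U t y)) x
          - deriv (fun y => σ (deriv (U t) y + deriv (φ t) y) - σ (deriv (U t) y)) x
        = deriv (fun y => σ (deriv (U t) y)) x) →
      (∃ B : ℝ, ∀ t ∈ Icc (0 : ℝ) T, ∀ x : ℝ,
        |φ t x| + |deriv (φ t) x| + |deriv (deriv (φ t)) x|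
          + |deriv (deriv (deriv (φ t))) x| + |deriv (fun s => deriv (φ s) x) t| ≤ B) →
      (∀ t ∈ Icc (0 : ℝ) T,
        Integrable (fun x : ℝ => (φ t x) ^ 2) ∧
        Integrable (fun x : ℝ => (deriv (φ t) x) ^ 2) ∧
        Integrable (fun x : ℝ => (deriv (deriv (φ t)) x) ^ 2) ∧
        Integrable (fun x : ℝ => (deriv (deriv (deriv (φ t))) x) ^ 2) ∧
        Integrable (fun x : ℝ => (deriv (fun s => deriv (φ s) x) t) ^ 2)) →
      (∃ B : ℝ, ∀ t ∈ Icc (0 : ℝ) T,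
        (∫ x : ℝ, (φ t x) ^ 2) + (∫ x : ℝ, (deriv (φ t) x) ^ 2)
          + (∫ x : ℝ, (deriv (deriv (φ t)) x) ^ 2)
          + (∫ x : ℝ, (deriv (deriv (deriv (φ t))) x) ^ 2)
          + (∫ x : ℝ, (deriv (fun s => deriv (φ s) x) t) ^ 2) ≤ B) →
      (∀ t ∈ Icc (0 : ℝ) T,
        Tendsto (φ t) atTop (nhds 0) ∧ Tendsto (φ t) atBot (nhds 0) ∧
        Tendsto (deriv (φ t)) atTop (nhds 0) ∧ Tendsto (deriv (φ t)) atBot (nhds 0) ∧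
        Tendsto (deriv (deriv (φ t))) atTop (nhds 0) ∧
        Tendsto (deriv (deriv (φ t))) atBot (nhds 0)) →
      L2norm (φ 0) + L2norm (deriv (φ 0)) + L2norm (deriv (deriv (φ 0)))
        + (⨆ x : ℝ, |φ 0 x|) ≤ M →
      ∀ N : ℝ,
      (∀ t ∈ Icc (0 : ℝ) T, ∀ x : ℝ, (1 + (deriv (φ t) x) ^ 2) ^ ((1 : ℝ) / 2) ≤ N) →
      ∀ t ∈ Icc (0 : ℝ) T,
        (∫ x : ℝ, (1 + (deriv (φ t) x) ^ 2) ^ (p - 1) * (deriv (deriv (φ t)) x) ^ 2)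
          + (∫ τ in (0:ℝ)..t, ∫ x : ℝ,
              (1 + (deriv (φ τ) x) ^ 2) ^ ((p - 1) / 2)
                * (deriv (fun s => deriv (φ s) x) τ) ^ 2)
        ≤ C₀ * N ^ (3 * (1 - p)) := by
  have hconvex : ConvexOn ℝ univ f := convexOn_univ_of_deriv2_nonneg
    (differentiable_of_contDiff_infty hf) (differentiable_of_contDiff_infty
      (contDiff_deriv_infty hf)) fun u => (hconv u).le
  obtain ⟨C₀, hC₀, hmain⟩ := second_derivative_energy_estimate_general
    ⟨p, c₁, c₂, um, up, CU, M, f, hp1.le, hc1, hf, hconvex⟩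
  refine ⟨C₀, hC₀, fun σ hσ _ hσ' U hU hU_eq hU_mem hUx_pos hUx hUx_norm _ hUxx _ hUxt T _ φ hφ
    hφ_eq hφ_bound hφ_int ⟨B, hB⟩ _ hinit N hN t ht => ?_⟩
  have hB' (t) (ht : t ∈ Icc 0 T) : (∫ x, φ t x ^ 2) + (∫ x, deriv (φ t) x ^ 2)
      + (∫ x, deriv (deriv (φ t)) x ^ 2) + (∫ x, deriv (fun s => deriv (φ s) x) t ^ 2) ≤ B := by
    have hφxxx : 0 ≤ ∫ x, deriv (deriv (deriv (φ t))) x ^ 2 := integral_nonneg fun _ => sq_nonneg _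
    linarith [hB t ht]
  have henergy := hmain ⟨T, σ, fun q => U q.1 q.2, fun q => φ q.1 q.2, hσ, hσ', hU,
    fun q hq => hU_eq q.1 hq.1.1 q.2, fun q hq => Ioo_subset_Icc_self (hU_mem q.1 hq.1.1 q.2),
    fun q hq => (hUx_pos q.1 hq.1.1 q.2).le, fun q hq => hUx q.1 hq.1.1 q.2,
    fun t ht => hUx_norm t ht.1, fun t ht => hUxx t ht.1, fun t ht => hUxt t ht.1, hφ,
    fun q hq => hφ_eq q.1 hq.1 q.2, hφ_bound.imp fun _ h q hq => h q.1 hq.1 q.2,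
    fun t ht => let h := hφ_int t ht; ⟨h.1, h.2.1, h.2.2.1, h.2.2.2.2⟩, ⟨B, hB'⟩, hinit⟩
    N (fun q hq => hN q.1 hq.1 q.2) t ht
  have hN1 : 1 ≤ N := (Real.one_le_rpow (by linarith [sq_nonneg (deriv (φ t) 0)])
    (by norm_num)).trans (hN t ht 0)
  exact henergy.trans (mul_le_mul_of_nonneg_left (Real.rpow_le_rpow_of_exponent_le hN1
    (by linarith)) hC₀.le)
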